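/- arXiv:2502.03768 — 2 statements merged into one kernel-verified Lean document; each statement's English description precedes it below -/
import Mathlib

section
/- For every n ≥ 2, the matrix R^(n)(x,y) satisfies the Yang–Baxter equation R^(n)_{12}(x,y) R^(n)_{13}(x,z) R^(n)_{23}(y,z) = R^(n)_{23}(y,z) R^(n)_{13}(x,z) R^(n)_{12}(x,y) in End(V ⊗ V ⊗ V), where R^(n)_{ab} denotes R^(n) acting on the a-th and b-th tensor factors of V ⊗ V ⊗ V and as the identity on the remaining factor. -/
noncomputable section
open scoped BigOperators

variable {F : Type*}

/-- `x ⊖ y := (x - y)/(1 + β·y)`. -/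
def om [Field F] (β x y : F) : F := (x - y) / (1 + β * y)

/-- `⊖ t := -t/(1 + β·t)`. -/
def negOm [Field F] (β t : F) : F := (-t) / (1 + β * t)

/-- The R-matrix `R^{(n)}(x,y)` on `V ⊗ V`, `V = F^n`, with entries
`R_{ij,kl} = (1 + [k<l]·β(x⊖y)) δ_{il} δ_{jk} + [k>l]·(x⊖y) δ_{ik} δ_{jl}`;
the row index is the pair `(i,j)`, the column index is the pair `(k,l)`. -/
def Rmat [Field F] (n : ℕ) (β x y : F) :
    Matrix (Fin n × Fin n) (Fin n × Fin n) F := Matrix.of fun p q =>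
  (if p.1 = q.2 ∧ p.2 = q.1 then (if q.1 < q.2 then 1 + β * om β x y else 1) else 0) +
  (if p.1 = q.1 ∧ p.2 = q.2 ∧ q.2 < q.1 then om β x y else 0)

/-- `R^{(n)}` acting on factors 1,2 of `V ⊗ V ⊗ V`. -/
def emb12 [Field F] (n : ℕ) (M : Matrix (Fin n × Fin n) (Fin n × Fin n) F) :
    Matrix (Fin n × Fin n × Fin n) (Fin n × Fin n × Fin n) F := Matrix.of fun p q =>
  M (p.1, p.2.1) (q.1, q.2.1) * (if p.2.2 = q.2.2 then 1 else 0)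

/-- `R^{(n)}` acting on factors 1,3 of `V ⊗ V ⊗ V`. -/
def emb13 [Field F] (n : ℕ) (M : Matrix (Fin n × Fin n) (Fin n × Fin n) F) :
    Matrix (Fin n × Fin n × Fin n) (Fin n × Fin n × Fin n) F := Matrix.of fun p q =>
  M (p.1, p.2.2) (q.1, q.2.2) * (if p.2.1 = q.2.1 then 1 else 0)

/-- `R^{(n)}` acting on factors 2,3 of `V ⊗ V ⊗ V`. -/
def emb23 [Field F] (n : ℕ) (M : Matrix (Fin n × Fin n) (Fin n × Fin n) F) :
    Matrix (Fin n × Fin n × Fin n) (Fin n × Fin n × Fin n) F := Matrix.of fun p q =>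
  M (p.2.1, p.2.2) (q.2.1, q.2.2) * (if p.1 = q.1 then 1 else 0)

/-!
Composing `R(x,y)` with the flip of `V ⊗ V` gives `1 + (x ⊖ y) D`, where `D` sorts the two indices
of a basis vector up to a scalar. Sorting adjacent pairs satisfies the 0-Hecke relations
`D² = β D` and `D₁₂ D₂₃ D₁₂ = D₂₃ D₁₂ D₂₃`, and in any algebra these imply
`(1 + u D₂₃)(1 + w D₁₂)(1 + v D₂₃) = (1 + v D₁₂)(1 + w D₂₃)(1 + u D₁₂)` for `w = u + v + β u v`
(Fomin–Kirillov). This is the braid form of the Yang–Baxter equation, because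
`x ⊖ z = (x ⊖ y) + (y ⊖ z) + β (x ⊖ y)(y ⊖ z)`.
-/

theorem one_add_smul_mul_braid {R A : Type*} [CommSemiring R] [Semiring A] [Algebra R A]
    {β u v w : R} {a b : A} (ha : a * a = β • a) (hb : b * b = β • b)
    (hab : a * b * a = b * a * b) (hw : w = u + v + β * u * v) :
    (1 + u • a) * (1 + w • b) * (1 + v • a) = (1 + v • b) * (1 + w • a) * (1 + u • b) := by
  have expand {c d : A} (hc : c * c = β • c) (s t : R) :
      (1 + s • c) * (1 + w • d) * (1 + t • c) =
        1 + (s + t + β * s * t) • c + w • d + (s * w) • (c * d) + (w * t) • (d * c) +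
          (s * w * t) • (c * d * c) := by
    simp only [mul_add, add_mul, mul_one, one_mul, smul_mul_smul_comm, hc]
    module
  rw [expand ha, expand hb, hab, hw]
  module

/-- The matrix of the linear map sending the basis vector `e_q` to `c q • e_{f q}`. It reduces
products of such maps to composition of functions on indices. -/
def weightedMapMatrix {m R : Type*} [DecidableEq m] [Zero R] (f : m → m) (c : m → R) :
    Matrix m m R :=
  Matrix.of fun p q => if p = f q then c q else 0

theorem weightedMapMatrix_mul {m R : Type*} [Fintype m] [DecidableEq m]
    [NonUnitalNonAssocSemiring R] (f g : m → m) (c d : m → R) :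
    weightedMapMatrix f c * weightedMapMatrix g d =
      weightedMapMatrix (f ∘ g) (fun q => c (g q) * d q) := by
  ext p q
  simp [weightedMapMatrix, Matrix.mul_apply]

section SortMatrix

variable {ι R : Type*} [LinearOrder ι]

/-- The scalar picked up by `v_k ⊗ v_l` when its indices are sorted by `sortMatrix`. -/
def sortWeight [Zero R] [One R] (β : R) (k l : ι) : R :=
  if k < l then β else if l < k then 1 else 0

/-- The generator of the 0-Hecke algebra with parameter `β` in its action on `V ⊗ V`: the basis
vector `v_k ⊗ v_l` goes to a multiple of `v_(min k l) ⊗ v_(max k l)`. -/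
def sortMatrix [Zero R] [One R] (β : R) : Matrix (ι × ι) (ι × ι) R :=
  weightedMapMatrix (fun q => (min q.1 q.2, max q.1 q.2)) (fun q => sortWeight β q.1 q.2)

theorem sortWeight_min_max_mul [NonAssocSemiring R] (β : R) (k l : ι) :
    sortWeight β (min k l) (max k l) * sortWeight β k l = β * sortWeight β k l := by
  rcases lt_trichotomy k l with h | rfl | h
  · simp [sortWeight, h, h.le]
  · simp [sortWeight]
  · simp [sortWeight, h, h.le, h.not_gt]

theorem sortMatrix_mul_self [Fintype ι] [NonAssocSemiring R] (β : R) :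
    (sortMatrix β : Matrix (ι × ι) (ι × ι) R) * sortMatrix β = β • sortMatrix β := by
  rw [sortMatrix, weightedMapMatrix_mul]
  ext p q
  simp [weightedMapMatrix, sortWeight_min_max_mul]

theorem sort_triple_braid (a b c : ι) :
    (min (min a b) (min (max a b) c), max (min a b) (min (max a b) c), max (max a b) c) =
      (min a (min b c), min (max a (min b c)) (max b c), max (max a (min b c)) (max b c)) := by
  grind

theorem sortWeight_mul_mul_sort_left_first [CommRing R] (β : R) (a b c : ι) :
    sortWeight β (min a b) (min (max a b) c) * sortWeight β (max a b) c * sortWeight β a b =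
      sortWeight β a b * sortWeight β a c * sortWeight β b c := by
  grind [sortWeight]

theorem sortWeight_mul_mul_sort_right_first [CommRing R] (β : R) (a b c : ι) :
    sortWeight β (max a (min b c)) (max b c) * sortWeight β a (min b c) * sortWeight β b c =
      sortWeight β a b * sortWeight β a c * sortWeight β b c := by
  grind [sortWeight]

end SortMatrix

section Embeddings

open scoped Kronecker

variable [Field F] {n : ℕ}

theorem emb12_eq_submatrix_kronecker (M : Matrix (Fin n × Fin n) (Fin n × Fin n) F) :
    emb12 n M = (M ⊗ₖ (1 : Matrix (Fin n) (Fin n) F)).submatrix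
      (Equiv.prodAssoc _ _ _).symm (Equiv.prodAssoc _ _ _).symm :=
  rfl

theorem emb23_eq_kronecker (M : Matrix (Fin n × Fin n) (Fin n × Fin n) F) :
    emb23 n M = (1 : Matrix (Fin n) (Fin n) F) ⊗ₖ M := by
  ext p q
  exact mul_comm _ _

theorem emb12_mul (M N : Matrix (Fin n × Fin n) (Fin n × Fin n) F) :
    emb12 n (M * N) = emb12 n M * emb12 n N := by
  simp only [emb12_eq_submatrix_kronecker, Matrix.submatrix_mul_equiv, ← Matrix.mul_kronecker_mul,
    mul_one]

theorem emb23_mul (M N : Matrix (Fin n × Fin n) (Fin n × Fin n) F) :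
    emb23 n (M * N) = emb23 n M * emb23 n N := by
  simp only [emb23_eq_kronecker, ← Matrix.mul_kronecker_mul, mul_one]

theorem emb12_smul (u : F) (M : Matrix (Fin n × Fin n) (Fin n × Fin n) F) :
    emb12 n (u • M) = u • emb12 n M := by
  simp only [emb12_eq_submatrix_kronecker, Matrix.smul_kronecker, Matrix.submatrix_smul,
    Pi.smul_apply]

theorem emb23_smul (u : F) (M : Matrix (Fin n × Fin n) (Fin n × Fin n) F) :
    emb23 n (u • M) = u • emb23 n M := by
  simp only [emb23_eq_kronecker, Matrix.kronecker_smul]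

theorem emb12_one_add (M : Matrix (Fin n × Fin n) (Fin n × Fin n) F) :
    emb12 n (1 + M) = 1 + emb12 n M := by
  simp only [emb12_eq_submatrix_kronecker, Matrix.add_kronecker, Matrix.one_kronecker_one,
    Matrix.submatrix_add, Pi.add_apply, Matrix.submatrix_one_equiv]

theorem emb23_one_add (M : Matrix (Fin n × Fin n) (Fin n × Fin n) F) :
    emb23 n (1 + M) = 1 + emb23 n M := by
  simp only [emb23_eq_kronecker, Matrix.kronecker_add, Matrix.one_kronecker_one]

theorem emb12_weightedMapMatrix (f : Fin n × Fin n → Fin n × Fin n) (c : Fin n × Fin n → F) :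
    emb12 n (weightedMapMatrix f c) =
      weightedMapMatrix (fun q => ((f (q.1, q.2.1)).1, (f (q.1, q.2.1)).2, q.2.2))
        (fun q => c (q.1, q.2.1)) := by
  ext p q
  simp [emb12, weightedMapMatrix, Prod.ext_iff, ← ite_and, and_comm, and_left_comm]

theorem emb23_weightedMapMatrix (f : Fin n × Fin n → Fin n × Fin n) (c : Fin n × Fin n → F) :
    emb23 n (weightedMapMatrix f c) =
      weightedMapMatrix (fun q => (q.1, f q.2)) (fun q => c q.2) := by
  ext p q
  simp [emb23, weightedMapMatrix, Prod.ext_iff, ← ite_and]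

-- Writing `R = P M` with `P` the flip, all flips move to the left, where they multiply to `P₁₃`.
theorem emb12_mul_emb13_mul_emb23_submatrix_swap
    (M N K : Matrix (Fin n × Fin n) (Fin n × Fin n) F) :
    emb12 n (M.submatrix Prod.swap id) * emb13 n (N.submatrix Prod.swap id) *
        emb23 n (K.submatrix Prod.swap id) =
      (emb23 n M * emb12 n N * emb23 n K).submatrix (fun p => (p.2.2, p.2.1, p.1)) id := by
  let rotate : Fin n × Fin n × Fin n ≃ Fin n × Fin n × Fin n :=
    ⟨fun p => (p.2.2, p.1, p.2.1), fun p => (p.2.1, p.2.2, p.1), fun _ => rfl, fun _ => rfl⟩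
  let swap23 : Fin n × Fin n × Fin n ≃ Fin n × Fin n × Fin n :=
    (Equiv.refl _).prodCongr (Equiv.prodComm _ _)
  rw [← Matrix.submatrix_mul_equiv _ _ _ swap23, ← Matrix.submatrix_mul_equiv _ _ _ rotate]
  rfl

theorem emb23_mul_emb13_mul_emb12_submatrix_swap
    (M N K : Matrix (Fin n × Fin n) (Fin n × Fin n) F) :
    emb23 n (M.submatrix Prod.swap id) * emb13 n (N.submatrix Prod.swap id) *
        emb12 n (K.submatrix Prod.swap id) =
      (emb12 n M * emb23 n N * emb12 n K).submatrix (fun p => (p.2.2, p.2.1, p.1)) id := by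
  let rotate : Fin n × Fin n × Fin n ≃ Fin n × Fin n × Fin n :=
    ⟨fun p => (p.2.1, p.2.2, p.1), fun p => (p.2.2, p.1, p.2.1), fun _ => rfl, fun _ => rfl⟩
  let swap12 : Fin n × Fin n × Fin n ≃ Fin n × Fin n × Fin n :=
    ⟨fun p => (p.2.1, p.1, p.2.2), fun p => (p.2.1, p.1, p.2.2), fun _ => rfl, fun _ => rfl⟩
  rw [← Matrix.submatrix_mul_equiv _ _ _ swap12, ← Matrix.submatrix_mul_equiv _ _ _ rotate]
  rfl

end Embeddings

theorem emb_sortMatrix_braid [Field F] (n : ℕ) (β : F) :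
    emb12 n (sortMatrix β) * emb23 n (sortMatrix β) * emb12 n (sortMatrix β) =
      emb23 n (sortMatrix β) * emb12 n (sortMatrix β) * emb23 n (sortMatrix β) := by
  simp only [sortMatrix, emb12_weightedMapMatrix, emb23_weightedMapMatrix, weightedMapMatrix_mul]
  congr 1
  · funext ⟨a, b, c⟩
    exact sort_triple_braid a b c
  · funext ⟨a, b, c⟩
    exact (sortWeight_mul_mul_sort_left_first β a b c).trans
      (sortWeight_mul_mul_sort_right_first β a b c).symm

theorem emb_one_add_smul_sortMatrix_braid [Field F] (n : ℕ) {β u v w : F}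
    (hw : w = u + v + β * u * v) :
    emb23 n (1 + u • sortMatrix β) * emb12 n (1 + w • sortMatrix β) *
        emb23 n (1 + v • sortMatrix β) =
      emb12 n (1 + v • sortMatrix β) * emb23 n (1 + w • sortMatrix β) *
        emb12 n (1 + u • sortMatrix β) := by
  have sq12 : emb12 n (sortMatrix β) * emb12 n (sortMatrix β) = β • emb12 n (sortMatrix β) := by
    rw [← emb12_mul, sortMatrix_mul_self, emb12_smul]
  have sq23 : emb23 n (sortMatrix β) * emb23 n (sortMatrix β) = β • emb23 n (sortMatrix β) := by
    rw [← emb23_mul, sortMatrix_mul_self, emb23_smul]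
  simp only [emb12_one_add, emb23_one_add, emb12_smul, emb23_smul]
  exact one_add_smul_mul_braid sq23 sq12 (emb_sortMatrix_braid n β).symm hw

theorem Rmat_eq_submatrix_swap [Field F] (n : ℕ) (β x y : F) :
    Rmat n β x y = (1 + om β x y • sortMatrix β).submatrix Prod.swap id := by
  ext ⟨i, j⟩ ⟨k, l⟩
  simp only [Rmat, sortMatrix, weightedMapMatrix, sortWeight, Matrix.submatrix_apply,
    Matrix.add_apply, Matrix.smul_apply, Matrix.one_apply, Matrix.of_apply, Prod.swap_prod_mk, id,
    Prod.mk.injEq, smul_eq_mul]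
  grind

theorem om_eq_add_add_mul [Field F] {β y z : F} (x : F) (hy : 1 + β * y ≠ 0)
    (hz : 1 + β * z ≠ 0) :
    om β x z = om β x y + om β y z + β * om β x y * om β y z := by
  have hxy : om β x y * (1 + β * y) = x - y := div_mul_cancel₀ _ hy
  have hyz : om β y z * (1 + β * z) = y - z := div_mul_cancel₀ _ hz
  rw [om, div_eq_iff hz]
  linear_combination -hxy - (1 + β * om β x y) * hyz

theorem one_add_mul_ne_zero_of_algebraicIndependent {ι R A : Type*} [CommRing R] [Nontrivial R]
    [CommRing A] [Algebra R A] {v : ι → A} (hv : AlgebraicIndependent R v) (i j : ι) :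
    1 + v i * v j ≠ 0 := by
  intro h
  have poly_eq_zero : (1 + MvPolynomial.X i * MvPolynomial.X j : MvPolynomial ι R) = 0 :=
    hv.eq_zero_of_aeval_eq_zero _ (by simpa using h)
  simpa using congrArg MvPolynomial.constantCoeff poly_eq_zero

theorem yang_baxter_equation_general [Field F] (n : ℕ) {β y z : F} (x : F) (hy : 1 + β * y ≠ 0)
    (hz : 1 + β * z ≠ 0) :
    emb12 n (Rmat n β x y) * emb13 n (Rmat n β x z) * emb23 n (Rmat n β y z) =
      emb23 n (Rmat n β y z) * emb13 n (Rmat n β x z) * emb12 n (Rmat n β x y) := by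
  simp only [Rmat_eq_submatrix_swap, emb12_mul_emb13_mul_emb23_submatrix_swap,
    emb23_mul_emb13_mul_emb12_submatrix_swap]
  rw [emb_one_add_smul_sortMatrix_braid n (om_eq_add_add_mul x hy hz)]

/-- **Yang–Baxter equation** for the `GL(n)` asymmetric five-vertex R-matrix:
`R^{(n)}_{12}(x,y) R^{(n)}_{13}(x,z) R^{(n)}_{23}(y,z)
  = R^{(n)}_{23}(y,z) R^{(n)}_{13}(x,z) R^{(n)}_{12}(x,y)`. -/
theorem yang_baxter_equation [Field F] [CharZero F] (n : ℕ) (hn : 2 ≤ n) (β x y z : F)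
    (hind : AlgebraicIndependent ℚ ![β, x, y, z]) :
    emb12 n (Rmat n β x y) * emb13 n (Rmat n β x z) * emb23 n (Rmat n β y z) =
      emb23 n (Rmat n β y z) * emb13 n (Rmat n β x z) * emb12 n (Rmat n β x y) := by
  exact yang_baxter_equation_general n x (one_add_mul_ne_zero_of_algebraicIndependent hind 0 2)
    (one_add_mul_ne_zero_of_algebraicIndependent hind 0 3)
end
end

section
/- Suppose the parameters σ^(1)_1,…,σ^(1)_{k_1}; σ^(2)_1,…,σ^(2)_{k_2}; …; σ^(n−1)_1,…,σ^(n−1)_{k_{n−1}} (with σ^(s)_a ≠ σ^(s)_b for a ≠ b) satisfy the Bethe ansatz equations: for α = 1,…,k_1: ∏_{a=1}^{k_1}(1+β(σ^(1)_a ⊖ σ^(1)_α)) · ∏_{i=1}^{N}(σ^(1)_α ⊖ t_i) = (−1)^{k_1−1} q_1 ∏_{b=1}^{k_2}(σ^(2)_b ⊖ σ^(1)_α); for 2 ≤ m ≤ n−2 and α = 1,…,k_m: ∏_{a=1}^{k_m}(1+β(σ^(m)_a ⊖ σ^(m)_α)) · ∏_{i=1}^{k_{m−1}}(σ^(m)_α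 ⊖ σ^(m−1)_i) = (−1)^{k_m−1} q_m ∏_{b=1}^{k_{m+1}}(σ^(m+1)_b ⊖ σ^(m)_α); and for α = 1,…,k_{n−1}: ∏_{a=1}^{k_{n−1}}(1+β(σ^(n−1)_a ⊖ σ^(n−1)_α)) · ∏_{i=1}^{k_{n−2}}(σ^(n−1)_α ⊖ σ^(n−2)_i) = (−1)^{k_{n−1}−1} q_{n−1}. Then the nested Bethe ansatz state |ψ^(0)⟩ is a common eigenvector of the transfer matrices t^(n)(u) for all u, i.e. there is a scalar-valued function Λ^(0)(u) with t^(n)(u) |ψ^(0)⟩ = Λ^(0)(u) |ψ^(0)⟩ as an identity of rational functions of u. -/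
noncomputable section
open scoped BigOperators

variable {F : Type*}

/-- `R_{a i}(u, τ)` : the R-matrix acting on the auxiliary space (first factor)
and the `i`-th site of `H = (F^n)^{⊗N}`, identity elsewhere. -/
def Rsite [Field F] (n N : ℕ) (β u τ : F) (i : Fin N) :
    Matrix (Fin n × (Fin N → Fin n)) (Fin n × (Fin N → Fin n)) F := Matrix.of fun p q =>
  Rmat n β u τ (p.1, p.2 i) (q.1, q.2 i) *
    (if ∀ j, j ≠ i → p.2 j = q.2 j then 1 else 0)

/-- The monodromy matrix `T_a(u) = R_{aN}(u,t_N) ⋯ R_{a1}(u,t_1)` on `V_a ⊗ H`. -/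
def Tmono [Field F] (n N : ℕ) (β u : F) (t : Fin N → F) :
    Matrix (Fin n × (Fin N → Fin n)) (Fin n × (Fin N → Fin n)) F :=
  ((List.ofFn fun i : Fin N => Rsite n N β u (t i) i).reverse).prod

/-- The block `T_a(u)_{r c}` (with respect to the auxiliary space) as an operator on `H`. -/
def blockOp [Field F] (n N : ℕ) (β u : F) (t : Fin N → F) (r c : Fin n) :
    Matrix (Fin N → Fin n) (Fin N → Fin n) F :=
  Matrix.of fun s s' => Tmono n N β u t (r, s) (c, s')

/-- The natural basis vector `|n_1,…,n_N⟩` of `H` (also used as a dual basis covector). -/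
def ket [Field F] (n N : ℕ) (g : Fin N → Fin n) : (Fin N → Fin n) → F :=
  fun s => if s = g then 1 else 0

/-- The nested Bethe ansatz states.  `psi β k σ j m` is the Bethe state of the
level-`m` system, a `GL(j+2)` model on `k m` sites with equivariant parameters
`σ m` and spectral parameters `σ (m+1)`.  The base case (`j = 0`) is the `GL(2)`
state `B_1(σ^{(m+1)}_1) ⋯ B_1(σ^{(m+1)}_{k(m+1)}) |Ω⟩`, and the recursion step is
`|ψ^{(m)}⟩ = ∑_i ⟨i|ψ^{(m+1)}⟩ · B_{i_1}(σ^{(m+1)}_1) ⋯ B_{i_{k(m+1)}}(σ^{(m+1)}_{k(m+1)}) |Ω⟩`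
(the basis label `i_s ∈ {0,…,j}` of the level-`(m+1)` space corresponding to the
operator `B_{i_s+1}` of the level-`m` system). -/
def psi [Field F] (β : F) (k : ℕ → ℕ) (σ : (l : ℕ) → Fin (k l) → F) :
    (j m : ℕ) → (Fin (k m) → Fin (j + 2)) → F
  | 0, m =>
      Matrix.mulVec
        ((List.ofFn fun a : Fin (k (m + 1)) =>
            blockOp 2 (k m) β (σ (m + 1) a) (σ m) 0 1).prod)
        (ket 2 (k m) fun _ => 0)
  | j + 1, m => fun s =>
      ∑ i : Fin (k (m + 1)) → Fin (j + 2),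
        psi β k σ j (m + 1) i *
          Matrix.mulVec
            ((List.ofFn fun a : Fin (k (m + 1)) =>
                blockOp (j + 3) (k m) β (σ (m + 1) a) (σ m) 0 ((i a).succ)).prod)
            (ket (j + 3) (k m) fun _ => 0) s

/-- The transfer matrix `t^{(n)}(u) = Tr_{V_a}(diag(b_0,…,b_{n-1}) T_a(u))`. -/
def transferM [Field F] (n N : ℕ) (β u : F) (t : Fin N → F) (b : Fin n → F) :
    Matrix (Fin N → Fin n) (Fin N → Fin n) F :=
  Matrix.of fun s s' => ∑ a : Fin n, b a * Tmono n N β u t (a, s) (a, s')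

/-!
In terms of the Hecke generators `π`, which satisfy `π² = βπ` and the braid relation, the R-matrix
is a permutation times `1 + (x ⊖ y) π`. The composition law of `⊖` then makes it a solution of the
Yang–Baxter equation, so the monodromy matrix satisfies the RTT relation. Moving `T₀₀(u)` and the
lower right block of `T(u)` through the creation operators with the resulting exchange relations
produces wanted terms, which act on `ψ` through the transfer matrix of the next level, and
unwanted terms, in which `u` has replaced some `σ α`. Since `R(σ α, σ α)` is the permutation, the
unwanted terms involve the next transfer matrix only at the points `σ α`, and there they cancel by
the Bethe equations. Going down the levels, the eigenvalue at the parameters of a level is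
explicit because one of its two summands vanishes. This is valid for generic `u`; the transfer
matrix is polynomial in `u`, which covers the remaining finitely many values.
-/

section OMinus

variable [Field F] {β : F}

theorem om_self (β x : F) : om β x x = 0 := by simp [om]

theorem om_ne_zero {x y : F} (hy : 1 + β * y ≠ 0) (h : x ≠ y) : om β x y ≠ 0 :=
  div_ne_zero (sub_ne_zero.mpr h) hy

theorem om_trans {y w : F} (hy : 1 + β * y ≠ 0) (hw : 1 + β * w ≠ 0) (x : F) :
    om β x w = om β x y + om β y w + β * om β x y * om β y w := by
  unfold om
  grind

theorem om_add_om_swap {x y : F} (hx : 1 + β * x ≠ 0) (hy : 1 + β * y ≠ 0) :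
    om β x y + om β y x + β * om β x y * om β y x = 0 := by
  rw [← om_trans hy hx x, om_self]

theorem inv_om (β x y : F) : (om β x y)⁻¹ = (1 + β * y) / (x - y) := by
  rw [om, inv_div]

theorem one_add_om_mul_inv_om {v : F} (hv : 1 + β * v ≠ 0) (u : F) :
    (1 + β * om β u v) * (om β u v)⁻¹ = -(om β v u)⁻¹ := by
  have numerator : 1 + β * om β u v = (1 + β * u) / (1 + β * v) := by
    unfold om
    field_simp
    ring
  rw [numerator, inv_om, inv_om, div_mul_div_cancel₀ hv, ← neg_sub u v, div_neg, neg_neg]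

theorem inv_om_eq_neg_one_add_om_mul_inv_om {x y : F} (hx : 1 + β * x ≠ 0) :
    (om β x y)⁻¹ = -(1 + β * om β y x) * (om β y x)⁻¹ := by
  rw [neg_mul, one_add_om_mul_inv_om hx, neg_neg]

theorem inv_om_mul_sub_inv_om_mul (β : F) {u x a : F} (hux : u ≠ x) (hua : u ≠ a) (hxa : x ≠ a) :
    (om β x u)⁻¹ * (om β a x)⁻¹ - (om β x u)⁻¹ * (om β a u)⁻¹ =
      -((om β a u)⁻¹ * (om β x a)⁻¹) := by
  have hxu : x - u ≠ 0 := sub_ne_zero.mpr hux.symm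
  have hau : a - u ≠ 0 := sub_ne_zero.mpr hua.symm
  have hax : a - x ≠ 0 := sub_ne_zero.mpr hxa.symm
  simp only [inv_om, ← neg_sub a x, div_neg]
  field_simp
  ring

theorem inv_om_mul_add_inv_om_mul (β : F) {u x a : F} (hux : u ≠ x) (hua : u ≠ a) (hxa : x ≠ a) :
    (om β x u)⁻¹ * (om β a x)⁻¹ + (om β u x)⁻¹ * (om β a u)⁻¹ =
      (om β a u)⁻¹ * (om β a x)⁻¹ := by
  have hxu : x - u ≠ 0 := sub_ne_zero.mpr hux.symm
  have hau : a - u ≠ 0 := sub_ne_zero.mpr hua.symm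
  have hax : a - x ≠ 0 := sub_ne_zero.mpr hxa.symm
  simp only [inv_om, ← neg_sub x u, div_neg]
  field_simp
  ring

end OMinus

section RCoefficients

variable [Field F] {ι : Type*} [LinearOrder ι]

/-- The coefficient `1 + [a < c]·βz` of the permutation part of the R-matrix with `x ⊖ y = z`. -/
def permCoeff (β z : F) (a c : ι) : F := if a < c then 1 + β * z else 1

/-- The coefficient `[a > c]·z` of the diagonal part of the R-matrix with `x ⊖ y = z`. -/
def diagCoeff (z : F) (a c : ι) : F := if c < a then z else 0

theorem permCoeff_self (β z : F) (a : ι) : permCoeff β z a a = 1 := by simp [permCoeff]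

theorem diagCoeff_self (z : F) (a : ι) : diagCoeff z a a = 0 := by simp [diagCoeff]

theorem permCoeff_zero (β : F) (a c : ι) : permCoeff β 0 a c = 1 := by simp [permCoeff]

theorem diagCoeff_zero (a c : ι) : diagCoeff (0 : F) a c = 0 := by simp [diagCoeff]

theorem Rmat_apply {n : ℕ} (β x y : F) (i j k l : Fin n) :
    Rmat n β x y (i, j) (k, l) =
      (if i = l ∧ j = k then permCoeff β (om β x y) k l else 0) +
      (if i = k ∧ j = l then diagCoeff (om β x y) k l else 0) := by
  simp only [Rmat, permCoeff, diagCoeff, Matrix.of_apply, ← and_assoc, ite_and]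

-- The next two lemmas are the off-diagonal and the diagonal entries of `R(x,y) R(y,x) = 1`.
theorem permCoeff_mul_diagCoeff_add_swap {β z z' : F} (h : z + z' + β * z * z' = 0) (a c : ι) :
    permCoeff β z a c * diagCoeff z' c a + diagCoeff z c a * permCoeff β z' c a = 0 := by
  rcases lt_trichotomy a c with hac | rfl | hca
  · simp only [permCoeff, diagCoeff, hac, hac.not_gt, if_true, if_false]
    linear_combination h
  · simp [diagCoeff]
  · simp [diagCoeff, hca.not_gt]

theorem permCoeff_mul_add_diagCoeff_mul {β z z' : F} (h : z + z' + β * z * z' = 0) (a c : ι) :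
    permCoeff β z a c * permCoeff β z' a c + diagCoeff z c a * diagCoeff z' a c = 1 := by
  rcases lt_trichotomy a c with hac | rfl | hca
  · simp only [permCoeff, diagCoeff, hac, hac.not_gt, if_true, if_false]
    linear_combination β * h
  · simp [permCoeff, diagCoeff]
  · simp [permCoeff, diagCoeff, hca.not_gt]

theorem inv_om_mul_sub_inv_om_mul_permCoeff {β u x a : F} (hu : 1 + β * u ≠ 0)
    (ha : 1 + β * a ≠ 0) (hux : u ≠ x) (hua : u ≠ a) (hxa : x ≠ a) (s i : ι) :
    (om β x u)⁻¹ * (om β a x)⁻¹ - (om β x u)⁻¹ * (om β a u)⁻¹ * permCoeff β (om β x u) s i =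
      -((om β a u)⁻¹ * (om β x a)⁻¹) * permCoeff β (om β x a) s i := by
  have three_term := inv_om_mul_sub_inv_om_mul β hux hua hxa
  have hxu := inv_mul_cancel₀ (om_ne_zero hu hux.symm)
  have hxa := inv_mul_cancel₀ (om_ne_zero ha hxa)
  unfold permCoeff
  split_ifs
  · linear_combination three_term + (om β a u)⁻¹ * β * (hxa - hxu)
  · linear_combination three_term

theorem inv_om_mul_diagCoeff {β u x a : F} (hu : 1 + β * u ≠ 0) (ha : 1 + β * a ≠ 0)
    (hux : u ≠ x) (hxa : x ≠ a) (s i : ι) :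
    (om β x u)⁻¹ * diagCoeff (om β x u) s i = (om β x a)⁻¹ * diagCoeff (om β x a) s i := by
  unfold diagCoeff
  split_ifs
  · rw [inv_mul_cancel₀ (om_ne_zero hu hux.symm), inv_mul_cancel₀ (om_ne_zero ha hxa)]
  · simp

end RCoefficients

section Hecke

variable [Field F] {ι : Type*} [LinearOrder ι]

/-- The Hecke generator `π` acting on the first two legs of `V ⊗ V ⊗ V`, whose elements are
encoded as functions of three indices. -/
def heckeLeft (β : F) : Module.End F (ι → ι → ι → F) where
  toFun v a b c := if a < b then β * v a b c + v b a c else 0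
  map_add' v w := by
    ext a b c
    simp only [Pi.add_apply]
    split_ifs <;> ring
  map_smul' r v := by
    ext a b c
    simp only [Pi.smul_apply, smul_eq_mul, RingHom.id_apply]
    split_ifs <;> ring

/-- The Hecke generator `π` acting on the last two legs of `V ⊗ V ⊗ V`. -/
def heckeRight (β : F) : Module.End F (ι → ι → ι → F) where
  toFun v a b c := if b < c then β * v a b c + v a c b else 0
  map_add' v w := by
    ext a b c
    simp only [Pi.add_apply]
    split_ifs <;> ring
  map_smul' r v := by
    ext a b c
    simp only [Pi.smul_apply, smul_eq_mul, RingHom.id_apply]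
    split_ifs <;> ring

theorem heckeLeft_mul_self (β : F) :
    heckeLeft (ι := ι) β * heckeLeft β = β • heckeLeft β := by
  ext v a b c
  simp only [heckeLeft, Module.End.mul_apply, LinearMap.coe_mk, AddHom.coe_mk,
    LinearMap.smul_apply, Pi.smul_apply, smul_eq_mul]
  grind

theorem heckeRight_mul_self (β : F) :
    heckeRight (ι := ι) β * heckeRight β = β • heckeRight β := by
  ext v a b c
  simp only [heckeRight, Module.End.mul_apply, LinearMap.coe_mk, AddHom.coe_mk,
    LinearMap.smul_apply, Pi.smul_apply, smul_eq_mul]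
  grind

theorem hecke_braid (β : F) :
    heckeLeft (ι := ι) β * heckeRight β * heckeLeft β =
      heckeRight β * heckeLeft β * heckeRight β := by
  ext v a b c
  simp only [heckeLeft, heckeRight, Module.End.mul_apply, LinearMap.coe_mk, AddHom.coe_mk]
  by_cases hab : a < b <;> by_cases hbc : b < c
  · simp only [hab, hbc, hab.trans hbc, hab.not_gt, hbc.not_gt, if_true, if_false,
      mul_zero, zero_add]
    ring
  all_goals grind

end Hecke

section Baxter

variable {K A : Type*} [CommRing K] [Ring A] [Algebra K A]

theorem baxterized_braid {β : K} {p q : A} (hp : p * p = β • p) (hq : q * q = β • q)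
    (hpq : p * q * p = q * p * q) (z w : K) :
    (1 + z • p) * (1 + (z + w + β * z * w) • q) * (1 + w • p) =
      (1 + w • q) * (1 + (z + w + β * z * w) • p) * (1 + z • q) := by
  simp only [mul_add, add_mul, one_mul, mul_one, smul_mul_assoc, mul_smul_comm, hp, hq, hpq]
  module

end Baxter

section LaxOperator

variable [Field F]

theorem one_add_smul_heckeLeft_apply {ι : Type*} [LinearOrder ι] (β z : F) (v : ι → ι → ι → F)
    (a b c : ι) :
    (1 + z • heckeLeft β : Module.End F _) v a b c =
      permCoeff β z a b * v a b c + diagCoeff z b a * v b a c := by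
  simp only [heckeLeft, permCoeff, diagCoeff, LinearMap.add_apply, Module.End.one_apply,
    LinearMap.smul_apply, LinearMap.coe_mk, AddHom.coe_mk, Pi.add_apply, Pi.smul_apply, smul_eq_mul]
  split_ifs <;> ring

theorem one_add_smul_heckeRight_apply {ι : Type*} [LinearOrder ι] (β z : F) (v : ι → ι → ι → F)
    (a b c : ι) :
    (1 + z • heckeRight β : Module.End F _) v a b c =
      permCoeff β z b c * v a b c + diagCoeff z c b * v a c b := by
  simp only [heckeRight, permCoeff, diagCoeff, LinearMap.add_apply, Module.End.one_apply,
    LinearMap.smul_apply, LinearMap.coe_mk, AddHom.coe_mk, Pi.add_apply, Pi.smul_apply, smul_eq_mul]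
  split_ifs <;> ring

/-- The basis vector `v_k ⊗ v_l ⊗ v_t` of `V ⊗ V ⊗ V`. -/
def basisTensor {ι : Type*} [DecidableEq ι] (k l t : ι) : ι → ι → ι → F :=
  Pi.single k (Pi.single l (Pi.single t 1))

theorem basisTensor_apply {ι : Type*} [DecidableEq ι] (k l t a b c : ι) :
    basisTensor (F := F) k l t a b c = if a = k ∧ b = l ∧ c = t then 1 else 0 := by
  simp only [basisTensor, Pi.single_apply, ite_apply, Pi.zero_apply, ite_and]

theorem one_add_smul_heckeLeft_basisTensor {ι : Type*} [LinearOrder ι] (β z : F) (k l t : ι) :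
    (1 + z • heckeLeft β : Module.End F _) (basisTensor k l t) =
      permCoeff β z k l • basisTensor k l t + diagCoeff z k l • basisTensor l k t := by
  ext a b c
  simp only [one_add_smul_heckeLeft_apply, basisTensor_apply, Pi.add_apply, Pi.smul_apply,
    smul_eq_mul, mul_ite, mul_one, mul_zero]
  grind

/-- The matrix `R(u, τ)` on `V_a ⊗ V`, as a matrix over the auxiliary space `V_a` whose entries are
operators on `V`. -/
def lax (n : ℕ) (β u τ : F) : Matrix (Fin n) (Fin n) (Matrix (Fin n) (Fin n) F) :=
  (Matrix.compRingEquiv (Fin n) (Fin n) F).symm (Rmat n β u τ)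

theorem lax_apply {n : ℕ} (β u τ : F) (c j s t : Fin n) :
    lax n β u τ c j s t =
      (if c = t ∧ s = j then permCoeff β (om β u τ) j t else 0) +
      (if c = j ∧ s = t then diagCoeff (om β u τ) j t else 0) :=
  Rmat_apply β u τ c s j t

theorem sum_lax_smul {H : Type*} [AddCommGroup H] [Module F H] {n : ℕ} (β u τ : F)
    (c j s : Fin n) (v : Fin n → H) :
    ∑ t, lax n β u τ c j s t • v t =
      (if s = j then permCoeff β (om β u τ) j c • v c else 0) +
      (if c = j then diagCoeff (om β u τ) j s • v s else 0) := by
  simp only [lax_apply, add_smul, Finset.sum_add_distrib, ite_smul, zero_smul, ite_and,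
    Finset.sum_ite_eq, Finset.mem_univ, if_true]
  split_ifs <;> simp

theorem lax_mul_apply {n : ℕ} (β u τ : F) (c j s t : Fin n) (M : Matrix (Fin n) (Fin n) F) :
    (lax n β u τ c j * M) s t =
      (if s = j then permCoeff β (om β u τ) j c * M c t else 0) +
      (if c = j then diagCoeff (om β u τ) j s * M s t else 0) :=
  sum_lax_smul β u τ c j s fun d => M d t

theorem lax_mul_lax_apply {n : ℕ} (β u v τ : F) (i j k l s t : Fin n) :
    (lax n β u τ j k * lax n β v τ i l) s t =
      ((1 + om β u τ • heckeLeft β) * (1 + om β v τ • heckeRight β) : Module.End F _)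
        (basisTensor k l t) s j i := by
  simp only [lax_mul_apply, lax_apply, Module.End.mul_apply, one_add_smul_heckeLeft_apply,
    one_add_smul_heckeRight_apply, basisTensor_apply]
  grind (splits := 20)

end LaxOperator

section RTT

variable [Field F] {R R' ι : Type*} [Ring R] [Algebra F R] [Ring R'] [Algebra F R'] [LinearOrder ι]

/-- The relation `R(x,y) T(x) T(y) = T(y) T(x) R(x,y)`, entry by entry, for a matrix `T(u)` with
entries in an algebra and indices in the auxiliary space. -/
def IsRTT (β : F) (T : F → Matrix ι ι R) : Prop :=
  ∀ x y, 1 + β * y ≠ 0 → ∀ i j k l,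
    permCoeff β (om β x y) j i • (T x j k * T y i l) +
      diagCoeff (om β x y) i j • (T x i k * T y j l) =
    permCoeff β (om β x y) k l • (T y j k * T x i l) +
      diagCoeff (om β x y) k l • (T y j l * T x i k)

theorem isRTT_lax (n : ℕ) {β τ : F} (hτ : 1 + β * τ ≠ 0) : IsRTT β (fun u => lax n β u τ) := by
  intro x y hy i j k l
  ext s t
  have yang_baxter := congrFun₃ (LinearMap.congr_fun
    (baxterized_braid (heckeRight_mul_self β) (heckeLeft_mul_self β) (hecke_braid β).symm
      (om β x y) (om β y τ)) (basisTensor k l t)) s j i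
  rw [← om_trans hy hτ x, mul_assoc, Module.End.mul_apply, one_add_smul_heckeRight_apply,
    Module.End.mul_apply _ (1 + om β x y • heckeLeft β), one_add_smul_heckeLeft_basisTensor]
    at yang_baxter
  simpa only [map_add, map_smul, Pi.add_apply, Pi.smul_apply, Matrix.add_apply, Matrix.smul_apply,
    smul_eq_mul, ← lax_mul_lax_apply] using yang_baxter

theorem isRTT_one (β : F) : IsRTT β (fun _ => (1 : Matrix ι ι R)) := by
  intro x y _ i j k l
  simp only [Matrix.one_apply, ite_mul, one_mul, zero_mul, smul_ite, smul_zero]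
  grind

theorem IsRTT.map {β : F} {T : F → Matrix ι ι R} (hT : IsRTT β T) (f : R →ₐ[F] R') :
    IsRTT β (fun u => (T u).map f) := by
  intro x y hy i j k l
  simpa using congrArg f (hT x y hy i j k l)

-- First the relation for `T`, then the one for `L` moves `R(x,y)` through `T(x)T(y)L(x)L(y)`.
theorem IsRTT.mul [Fintype ι] {β : F} {T L : F → Matrix ι ι R} (hT : IsRTT β T) (hL : IsRTT β L)
    (comm : ∀ x y i j k l, Commute (T x i j) (L y k l)) : IsRTT β (fun u => T u * L u) := by
  intro x y hy i j k l
  have expand (v w : F) (a b c d : ι) : (T v * L v) a b * (T w * L w) c d =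
      ∑ e, ∑ f, T v a e * T w c f * (L v e b * L w f d) := by
    simp only [Matrix.mul_apply, Finset.sum_mul_sum, (comm _ _ _ _ _ _).symm.mul_mul_mul_comm]
  simp only [expand]
  generalize hz : om β x y = z
  calc _ = ∑ e, ∑ f, (permCoeff β z j i • (T x j e * T y i f) +
            diagCoeff z i j • (T x i e * T y j f)) * (L x e k * L y f l) := by
        simp only [Finset.smul_sum, ← Finset.sum_add_distrib, add_mul, smul_mul_assoc]
    _ = ∑ e, ∑ f, (permCoeff β z e f • (T y j e * T x i f) +
            diagCoeff z e f • (T y j f * T x i e)) * (L x e k * L y f l) := by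
        simp only [← hz, hT x y hy]
    _ = ∑ e, ∑ f, (T y j e * T x i f) * (permCoeff β z e f • (L x e k * L y f l) +
            diagCoeff z f e • (L x f k * L y e l)) := by
        simp only [add_mul, mul_add, Finset.sum_add_distrib, smul_mul_assoc, mul_smul_comm]
        congr 1
        exact Finset.sum_comm
    _ = ∑ e, ∑ f, (T y j e * T x i f) * (permCoeff β z k l • (L y e k * L x f l) +
            diagCoeff z k l • (L y e l * L x f k)) := by
        simp only [← hz, hL x y hy]
    _ = _ := by
        simp only [Finset.smul_sum, ← Finset.sum_add_distrib, mul_add, mul_smul_comm]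

end RTT

section Monodromy

variable [Field F] {n N : ℕ}

/-- Operators on `N + 1` sites as matrices over the first site with entries in the operators on the
other sites. -/
def headTailAlgEquiv : Matrix (Fin n) (Fin n) (Matrix (Fin N → Fin n) (Fin N → Fin n) F) ≃ₐ[F]
    Matrix (Fin (N + 1) → Fin n) (Fin (N + 1) → Fin n) F :=
  (Matrix.compAlgEquiv (Fin n) (Fin N → Fin n) F F).trans
    (Matrix.reindexAlgEquiv F F (Fin.consEquiv fun _ => Fin n))

/-- The embedding `M ↦ M ⊗ 1` of operators on the first site into operators on `N + 1` sites. -/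
def onHead : Matrix (Fin n) (Fin n) F →ₐ[F] Matrix (Fin (N + 1) → Fin n) (Fin (N + 1) → Fin n) F :=
  headTailAlgEquiv.toAlgHom.comp
    (Algebra.ofId F (Matrix (Fin N → Fin n) (Fin N → Fin n) F)).mapMatrix

/-- The embedding `M ↦ 1 ⊗ M` of operators on the last `N` sites into operators on `N + 1` sites. -/
def onTail : Matrix (Fin N → Fin n) (Fin N → Fin n) F →ₐ[F]
    Matrix (Fin (N + 1) → Fin n) (Fin (N + 1) → Fin n) F :=
  headTailAlgEquiv.toAlgHom.comp (Matrix.scalarAlgHom (Fin n) F)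

theorem onHead_apply (M : Matrix (Fin n) (Fin n) F) (s t : Fin (N + 1) → Fin n) :
    onHead M s t = if Fin.tail s = Fin.tail t then M (s 0) (t 0) else 0 :=
  Matrix.diagonal_apply ..

theorem onTail_apply (M : Matrix (Fin N → Fin n) (Fin N → Fin n) F) (s t : Fin (N + 1) → Fin n) :
    onTail M s t = if s 0 = t 0 then M (Fin.tail s) (Fin.tail t) else 0 := by
  change Matrix.diagonal (fun _ => M) (s 0) (t 0) (Fin.tail s) (Fin.tail t) = _
  rw [Matrix.diagonal_apply]
  split_ifs <;> rfl

theorem commute_onTail_onHead (M : Matrix (Fin N → Fin n) (Fin N → Fin n) F)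
    (L : Matrix (Fin n) (Fin n) F) : Commute (onTail M) (onHead L) := by
  suffices h : Commute (Matrix.scalar (Fin n) M) (L.map (algebraMap F _)) from
    h.map (headTailAlgEquiv (F := F))
  rw [Matrix.scalar_commute_iff]
  exact Matrix.ext fun i j => (Algebra.commutes (L i j) M).symm

/-- The monodromy matrix as a matrix over the auxiliary space with entries in the operators on
the quantum space, i.e. the matrix of the blocks `blockOp`. -/
def monodromyBlocks (n N : ℕ) (β u : F) (t : Fin N → F) :
    Matrix (Fin n) (Fin n) (Matrix (Fin N → Fin n) (Fin N → Fin n) F) :=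
  (Matrix.compRingEquiv (Fin n) (Fin N → Fin n) F).symm (Tmono n N β u t)

theorem compRingEquiv_symm_Rsite_zero (β u τ : F) :
    (Matrix.compRingEquiv (Fin n) (Fin (N + 1) → Fin n) F).symm (Rsite n (N + 1) β u τ 0) =
      (lax n β u τ).map onHead := by
  ext r c s t
  have same_tail : (∀ j, j ≠ 0 → s j = t j) ↔ Fin.tail s = Fin.tail t := by
    simp [Fin.forall_fin_succ, funext_iff, Fin.tail]
  simp [Rsite, lax, onHead_apply, same_tail]

theorem compRingEquiv_symm_Rsite_succ (β u τ : F) (i : Fin N) :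
    (Matrix.compRingEquiv (Fin n) (Fin (N + 1) → Fin n) F).symm (Rsite n (N + 1) β u τ i.succ) =
      ((Matrix.compRingEquiv (Fin n) (Fin N → Fin n) F).symm (Rsite n N β u τ i)).map onTail := by
  ext r c s t
  have same_elsewhere : (∀ j, j ≠ i.succ → s j = t j) ↔
      s 0 = t 0 ∧ ∀ j, j ≠ i → Fin.tail s j = Fin.tail t j := by
    simp [Fin.forall_fin_succ, Fin.tail, (Fin.succ_ne_zero i).symm]
  simp only [Rsite, mul_ite, mul_one, mul_zero, Matrix.compRingEquiv_symm_apply,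
    Matrix.comp_symm_apply, Matrix.of_apply, same_elsewhere, Fin.tail, ite_and, Matrix.map_apply,
    onTail_apply]
  congr

theorem monodromyBlocks_zero (β u : F) (t : Fin 0 → F) : monodromyBlocks n 0 β u t = 1 := by
  simp only [monodromyBlocks, Tmono, List.ofFn_zero, List.reverse_nil, List.prod_nil, map_one]

theorem monodromyBlocks_succ (β u : F) (t : Fin (N + 1) → F) :
    monodromyBlocks n (N + 1) β u t =
      (monodromyBlocks n N β u (Fin.tail t)).map onTail * (lax n β u (t 0)).map onHead := by
  simp only [monodromyBlocks, Tmono, List.ofFn_succ, List.reverse_cons, List.prod_append,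
    List.prod_singleton, map_mul, compRingEquiv_symm_Rsite_zero]
  congr 1
  change _ = onTail.mapMatrix _
  simp only [map_list_prod, List.map_reverse, List.map_ofFn, Function.comp_def,
    compRingEquiv_symm_Rsite_succ]
  rfl

theorem isRTT_monodromyBlocks {β : F} {t : Fin N → F} (ht : ∀ a, 1 + β * t a ≠ 0) :
    IsRTT β (fun u => monodromyBlocks n N β u t) := by
  induction N with
  | zero => simpa only [monodromyBlocks_zero] using isRTT_one β
  | succ N ih =>
    simp only [monodromyBlocks_succ]
    exact ((ih fun a => ht a.succ).map onTail).mul ((isRTT_lax n (ht 0)).map onHead)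
      fun _ _ _ _ _ _ => commute_onTail_onHead _ _

/-- The monodromy matrix as a matrix over the auxiliary space with entries in the endomorphisms of
the quantum space. -/
def monodromy (n N : ℕ) (β : F) (t : Fin N → F) (u : F) :
    Matrix (Fin n) (Fin n) (Module.End F ((Fin N → Fin n) → F)) :=
  (monodromyBlocks n N β u t).map (Matrix.toLinAlgEquiv' (R := F))

theorem monodromy_apply_apply (β u : F) (t : Fin N → F) (r c : Fin n)
    (ψ : (Fin N → Fin n) → F) :
    monodromy n N β t u r c ψ = (blockOp n N β u t r c).mulVec ψ := rfl

theorem isRTT_monodromy {β : F} {t : Fin N → F} (ht : ∀ a, 1 + β * t a ≠ 0) :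
    IsRTT β (monodromy n N β t) :=
  (isRTT_monodromyBlocks ht).map (Matrix.toLinAlgEquiv' (R := F)).toAlgHom

/-- The contraction `⟨s| ⊗ 1` of the first site. -/
def slice (F : Type*) [Field F] {n N : ℕ} (s : Fin n) :
    ((Fin (N + 1) → Fin n) → F) →ₗ[F] ((Fin N → Fin n) → F) :=
  LinearMap.funLeft F F (Fin.cons (α := fun _ => Fin n) s)

theorem ext_slice {v w : (Fin (N + 1) → Fin n) → F} (h : ∀ s, slice F s v = slice F s w) :
    v = w := by
  ext s
  simpa [slice, LinearMap.funLeft_apply] using congrFun (h (s 0)) (Fin.tail s)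

theorem slice_onTail_mulVec (M : Matrix (Fin N → Fin n) (Fin N → Fin n) F) (s : Fin n)
    (ψ : (Fin (N + 1) → Fin n) → F) :
    slice F s ((onTail M).mulVec ψ) = M.mulVec (slice F s ψ) := by
  ext e
  simp only [slice, LinearMap.funLeft_apply, Matrix.mulVec, dotProduct, onTail_apply, ite_mul,
    zero_mul, Fin.cons_zero, Fin.tail_cons]
  rw [← (Fin.consEquiv fun _ => Fin n).sum_comp, Fintype.sum_prod_type]
  simp [Fin.consEquiv]

theorem slice_onHead_mulVec (L : Matrix (Fin n) (Fin n) F) (s : Fin n)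
    (ψ : (Fin (N + 1) → Fin n) → F) :
    slice F s ((onHead L).mulVec ψ) = ∑ d, L s d • slice F d ψ := by
  ext e
  simp only [slice, LinearMap.funLeft_apply, Matrix.mulVec, dotProduct, onHead_apply, ite_mul,
    zero_mul, Fin.cons_zero, Fin.tail_cons]
  rw [← (Fin.consEquiv fun _ => Fin n).sum_comp, Fintype.sum_prod_type]
  simp [Fin.consEquiv, LinearMap.funLeft_apply]

theorem monodromy_zero_apply (β u : F) (t : Fin 0 → F) (r c : Fin n) (ψ : (Fin 0 → Fin n) → F) :
    monodromy n 0 β t u r c ψ = if r = c then ψ else 0 := by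
  simp only [monodromy, monodromyBlocks_zero, Matrix.map_apply, Matrix.one_apply, apply_ite,
    map_one, map_zero]
  split_ifs <;> rfl

theorem slice_monodromy (β u : F) (t : Fin (N + 1) → F) (r c s : Fin n)
    (ψ : (Fin (N + 1) → Fin n) → F) :
    slice F s (monodromy n (N + 1) β t u r c ψ) =
      (if s = c then ∑ d, permCoeff β (om β u (t 0)) c d •
        monodromy n N β (Fin.tail t) u r d (slice F d ψ) else 0) +
      diagCoeff (om β u (t 0)) c s • monodromy n N β (Fin.tail t) u r c (slice F s ψ) := by
  have expand : monodromy n (N + 1) β t u r c ψ =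
      ∑ e, (onTail (monodromyBlocks n N β u (Fin.tail t) r e)).mulVec
        ((onHead (lax n β u (t 0) e c)).mulVec ψ) := by
    simp only [monodromy, monodromyBlocks_succ, Matrix.map_apply, Matrix.mul_apply, map_sum,
      LinearMap.sum_apply, map_mul, Module.End.mul_apply]
    rfl
  have fold (e : Fin n) (φ : (Fin N → Fin n) → F) :
      (monodromyBlocks n N β u (Fin.tail t) r e).mulVec φ =
        monodromy n N β (Fin.tail t) u r e φ := rfl
  simp only [expand, map_sum, slice_onTail_mulVec, slice_onHead_mulVec, sum_lax_smul, fold]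
  by_cases hs : s = c <;>
    simp [hs, apply_ite (monodromy n N β (Fin.tail t) u r _), Finset.sum_add_distrib]

end Monodromy

section Vacuum

variable [Field F] {m N : ℕ}

/-- `Ω` is a pseudo-vacuum for `T`: in the block decomposition of the auxiliary space as
`F ⊕ F^m`, the upper left entry of `T u` acts on `Ω` as the scalar `a u`, and the lower right block
as the scalar matrix `d u`. -/
structure IsVacuum {H : Type*} [AddCommGroup H] [Module F H]
    (T : F → Matrix (Fin (m + 1)) (Fin (m + 1)) (Module.End F H)) (Ω : H) (a d : F → F) : Prop where
  zero_zero : ∀ u, T u 0 0 Ω = a u • Ω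
  succ_succ : ∀ u i j, T u (Fin.succ i) (Fin.succ j) Ω = if i = j then d u • Ω else 0

theorem slice_ket_zero (s : Fin (m + 1)) :
    slice F s (ket (m + 1) (N + 1) fun _ => 0) = if s = 0 then ket (m + 1) N fun _ => 0 else 0 := by
  ext e
  have cons_eq : (Fin.cons s e : Fin (N + 1) → Fin (m + 1)) = (fun _ => 0) ↔
      s = 0 ∧ e = fun _ => 0 := by
    simp [funext_iff, Fin.forall_fin_succ]
  simp only [slice, LinearMap.funLeft_apply, ket, cons_eq, ite_and, ite_apply, Pi.zero_apply]

theorem monodromy_zero_right_ket (β u : F) (t : Fin N → F) (r : Fin (m + 1)) :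
    monodromy (m + 1) N β t u r 0 (ket (m + 1) N fun _ => 0) =
      if r = 0 then ket (m + 1) N fun _ => 0 else 0 := by
  induction N with
  | zero => exact monodromy_zero_apply ..
  | succ N ih =>
    refine ext_slice fun s => ?_
    simp only [slice_monodromy, slice_ket_zero, apply_ite (slice F s), map_zero]
    by_cases hs : s = 0 <;>
      simp [hs, apply_ite (monodromy (m + 1) N β _ u r _), ih, diagCoeff, permCoeff]

theorem monodromy_succ_succ_ket (β u : F) (t : Fin N → F) (i j : Fin m) :
    monodromy (m + 1) N β t u i.succ j.succ (ket (m + 1) N fun _ => 0) =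
      if i = j then (∏ a, om β u (t a)) • ket (m + 1) N fun _ => 0 else 0 := by
  induction N with
  | zero => simp [monodromy_zero_apply]
  | succ N ih =>
    refine ext_slice fun s => ?_
    simp only [slice_monodromy, slice_ket_zero, apply_ite (slice F s), map_zero, map_smul]
    by_cases hs : s = 0
    · simp [hs, ih, (Fin.succ_ne_zero j).symm, diagCoeff, Fin.prod_univ_succ, smul_smul, Fin.tail]
    · simp [hs, apply_ite (monodromy (m + 1) N β _ u _ _), monodromy_zero_right_ket]

theorem isVacuum_monodromy (β : F) (t : Fin N → F) :
    IsVacuum (monodromy (m + 1) N β t) (ket (m + 1) N fun _ => 0) 1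
      (fun u => ∏ a, om β u (t a)) where
  zero_zero u := by simp [monodromy_zero_right_ket]
  succ_succ u i j := monodromy_succ_succ_ket β u t i j

end Vacuum

section ExchangeRelations

variable [Field F] {R : Type*} [Ring R] [Algebra F R] {m : ℕ} {β : F}
  {T : F → Matrix (Fin (m + 1)) (Fin (m + 1)) R}

theorem IsRTT.zero_zero_mul_zero_succ (hT : IsRTT β T) {u v : F} (hu : 1 + β * u ≠ 0)
    (huv : u ≠ v) (s : Fin m) :
    T u 0 0 * T v 0 s.succ =
      (om β v u)⁻¹ • (T v 0 s.succ * T u 0 0 - T u 0 s.succ * T v 0 0) := by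
  have relation := hT v u hu 0 0 s.succ 0
  simp only [permCoeff, diagCoeff, lt_self_iff_false, Fin.not_lt_zero, Fin.succ_pos, if_true,
    if_false, one_smul, zero_smul, add_zero] at relation
  rw [relation, add_sub_cancel_left, inv_smul_smul₀ (om_ne_zero hu huv.symm)]

theorem IsRTT.succ_succ_mul_zero_succ (hT : IsRTT β T) {u v : F} (hv : 1 + β * v ≠ 0)
    (huv : u ≠ v) (i j s : Fin m) :
    T u i.succ j.succ * T v 0 s.succ =
      (om β u v)⁻¹ • (permCoeff β (om β u v) j s • (T v 0 j.succ * T u i.succ s.succ) +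
        diagCoeff (om β u v) j s • (T v 0 s.succ * T u i.succ j.succ)) +
      (om β v u)⁻¹ • (T u 0 j.succ * T v i.succ s.succ) := by
  have relation : (1 + β * om β u v) • (T u 0 j.succ * T v i.succ s.succ) +
        om β u v • (T u i.succ j.succ * T v 0 s.succ) =
      permCoeff β (om β u v) j s • (T v 0 j.succ * T u i.succ s.succ) +
        diagCoeff (om β u v) j s • (T v 0 s.succ * T u i.succ j.succ) := by
    simpa [permCoeff, diagCoeff] using hT u v hv i.succ 0 j.succ s.succ
  have swap := one_add_om_mul_inv_om hv u
  have cancel := inv_mul_cancel₀ (om_ne_zero hv huv)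
  linear_combination (norm := module) (om β u v)⁻¹ • relation -
    cancel • (T u i.succ j.succ * T v 0 s.succ) - swap • (T u 0 j.succ * T v i.succ s.succ)

theorem IsRTT.zero_succ_mul_zero_succ (hT : IsRTT β T) {u v : F} (hv : 1 + β * v ≠ 0)
    (i j : Fin m) :
    T u 0 i.succ * T v 0 j.succ =
      permCoeff β (om β u v) i j • (T v 0 i.succ * T u 0 j.succ) +
        diagCoeff (om β u v) i j • (T v 0 j.succ * T u 0 i.succ) := by
  simpa [permCoeff, diagCoeff] using hT u v hv 0 0 i.succ j.succ

theorem IsRTT.inv_om_smul_sub (hT : IsRTT β T) {u x a : F} (hu : 1 + β * u ≠ 0)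
    (ha : 1 + β * a ≠ 0) (hux : u ≠ x) (hua : u ≠ a) (hxa : x ≠ a) (s i : Fin m) :
    (om β x u)⁻¹ • ((om β a u)⁻¹ • (T x 0 s.succ * T u 0 i.succ) -
        (om β a x)⁻¹ • (T u 0 s.succ * T x 0 i.succ)) =
      ((om β a u)⁻¹ * (om β x a)⁻¹) •
        (permCoeff β (om β x a) s i • (T u 0 s.succ * T x 0 i.succ) +
          diagCoeff (om β x a) s i • (T u 0 i.succ * T x 0 s.succ)) := by
  have perm := inv_om_mul_sub_inv_om_mul_permCoeff hu ha hux hua hxa s i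
  have diag := inv_om_mul_diagCoeff hu ha hux hxa s i
  rw [hT.zero_succ_mul_zero_succ hu]
  linear_combination (norm := module) (-perm) • (T u 0 s.succ * T x 0 i.succ) +
    ((om β a u)⁻¹ * diag) • (T u 0 i.succ * T x 0 s.succ)

theorem IsRTT.inv_om_smul_add (hT : IsRTT β T) {u x a : F} (hx : 1 + β * x ≠ 0)
    (hux : u ≠ x) (hua : u ≠ a) (hxa : x ≠ a) (j s : Fin m) :
    ((om β u x)⁻¹ * (om β a u)⁻¹) • (permCoeff β (om β u x) j s • (T x 0 j.succ * T u 0 s.succ) +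
        diagCoeff (om β u x) j s • (T x 0 s.succ * T u 0 j.succ)) +
      ((om β x u)⁻¹ * (om β a x)⁻¹) • (T u 0 j.succ * T x 0 s.succ) =
    ((om β a u)⁻¹ * (om β a x)⁻¹) • (T u 0 j.succ * T x 0 s.succ) := by
  rw [← hT.zero_succ_mul_zero_succ hx, ← add_smul, add_comm,
    inv_om_mul_add_inv_om_mul β hux hua hxa]

end ExchangeRelations

section BetheAnsatz

variable [Field F] {H : Type*} [AddCommGroup H] [Module F H] {k m : ℕ} {β : F}
  {T : F → Matrix (Fin (m + 1)) (Fin (m + 1)) (Module.End F H)} {Ω : H} {a d : F → F}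

/-- The Bethe map `ψ ↦ ∑ᵢ ψ(i) B_{i₁}(σ₁) ⋯ B_{i_k}(σ_k) Ω`, where `B_s(u)` is the entry of `T u` in
row `0` and column `s + 1`. -/
def betheMap (T : F → Matrix (Fin (m + 1)) (Fin (m + 1)) (Module.End F H)) (Ω : H)
    (σ : Fin k → F) : ((Fin k → Fin m) → F) →ₗ[F] H :=
  ∑ i, (LinearMap.proj i).smulRight ((List.ofFn fun c => T (σ c) 0 (i c).succ).prod Ω)

theorem betheMap_apply (σ : Fin k → F) (ψ : (Fin k → Fin m) → F) :
    betheMap T Ω σ ψ = ∑ i, ψ i • (List.ofFn fun c => T (σ c) 0 (i c).succ).prod Ω := by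
  simp [betheMap]

theorem betheMap_zero (σ : Fin 0 → F) (ψ : (Fin 0 → Fin m) → F) :
    betheMap T Ω σ ψ = ψ default • Ω := by
  simp [betheMap_apply]

theorem betheMap_cons (x : F) (τ : Fin k → F) (ψ : (Fin (k + 1) → Fin m) → F) :
    betheMap T Ω (Fin.cons x τ : Fin (k + 1) → F) ψ =
      ∑ s, T x 0 s.succ (betheMap T Ω τ (slice F s ψ)) := by
  simp only [betheMap_apply, map_sum, map_smul]
  rw [← (Fin.consEquiv fun _ => Fin m).sum_comp, Fintype.sum_prod_type]
  simp [Fin.consEquiv, slice, LinearMap.funLeft_apply]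

/-- The components `W_α(s)` of the Bethe map after the creation operators with parameter `σ α` have
been moved to the front, `Φ ψ = ∑ₛ B_s(σ α) W_α(s) ψ`: the vectors met in the unwanted terms of the
action of the upper left entry of `T`. -/
def frontComponent (β : F) (T : F → Matrix (Fin (m + 1)) (Fin (m + 1)) (Module.End F H)) (Ω : H) :
    {k : ℕ} → (Fin k → F) → Fin k → Fin m → ((Fin k → Fin m) → F) →ₗ[F] H
  | 0, _ => Fin.elim0
  | _ + 1, σ => Fin.cons (fun s => betheMap T Ω (Fin.tail σ) ∘ₗ slice F s) fun α s =>
      ∑ i, (permCoeff β (om β (σ 0) (σ α.succ)) s i •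
          (T (σ 0) 0 i.succ ∘ₗ frontComponent β T Ω (Fin.tail σ) α i ∘ₗ slice F s) +
        diagCoeff (om β (σ 0) (σ α.succ)) i s •
          (T (σ 0) 0 i.succ ∘ₗ frontComponent β T Ω (Fin.tail σ) α s ∘ₗ slice F i))

/-- The vectors met in the unwanted terms of the action of row `i` of the lower right block of
`T`. -/
def dressedFrontComponent (β : F)
    (T : F → Matrix (Fin (m + 1)) (Fin (m + 1)) (Module.End F H)) (Ω : H) :
    {k : ℕ} → (Fin k → F) → Fin k → Fin m → ((Fin k → Fin m) → F) →ₗ[F] H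
  | 0, _ => Fin.elim0
  | k + 1, σ => Fin.cons
      (fun i => ∑ s,
        betheMap T Ω (Fin.tail σ) ∘ₗ monodromy m k β (Fin.tail σ) (σ 0) i s ∘ₗ slice F s)
      fun α i => ∑ s, T (σ 0) 0 s.succ ∘ₗ dressedFrontComponent β T Ω (Fin.tail σ) α i ∘ₗ slice F s

theorem frontComponent_cons_zero (x : F) (τ : Fin k → F) (s : Fin m)
    (ψ : (Fin (k + 1) → Fin m) → F) :
    frontComponent β T Ω (Fin.cons x τ) 0 s ψ = betheMap T Ω τ (slice F s ψ) := rfl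

theorem frontComponent_cons_succ (x : F) (τ : Fin k → F) (α : Fin k) (s : Fin m)
    (ψ : (Fin (k + 1) → Fin m) → F) :
    frontComponent β T Ω (Fin.cons x τ) α.succ s ψ = ∑ i, T x 0 i.succ
      (permCoeff β (om β x (τ α)) s i • frontComponent β T Ω τ α i (slice F s ψ) +
        diagCoeff (om β x (τ α)) i s • frontComponent β T Ω τ α s (slice F i ψ)) := by
  simp [frontComponent]

theorem dressedFrontComponent_cons_zero (x : F) (τ : Fin k → F) (i : Fin m)
    (ψ : (Fin (k + 1) → Fin m) → F) :
    dressedFrontComponent β T Ω (Fin.cons x τ) 0 i ψ =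
      ∑ s, betheMap T Ω τ (monodromy m k β τ x i s (slice F s ψ)) := by
  simp [dressedFrontComponent]

theorem dressedFrontComponent_cons_succ (x : F) (τ : Fin k → F) (α : Fin k) (i : Fin m)
    (ψ : (Fin (k + 1) → Fin m) → F) :
    dressedFrontComponent β T Ω (Fin.cons x τ) α.succ i ψ =
      ∑ s, T x 0 s.succ (dressedFrontComponent β T Ω τ α i (slice F s ψ)) := by
  simp [dressedFrontComponent]

theorem prod_erase_zero {M : Type*} [CommMonoid M] (f : Fin (k + 1) → M) :
    ∏ c ∈ Finset.univ.erase 0, f c = ∏ c : Fin k, f c.succ := by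
  simp [Fin.univ_succ]

theorem prod_erase_succ {M : Type*} [CommMonoid M] (f : Fin (k + 1) → M) (α : Fin k) :
    ∏ c ∈ Finset.univ.erase α.succ, f c = f 0 * ∏ c ∈ Finset.univ.erase α, f c.succ := by
  simp only [← Finset.filter_ne', Finset.prod_filter, Fin.prod_univ_succ, ne_eq,
    Fin.succ_inj, (Fin.succ_ne_zero α).symm, not_false_eq_true, if_true]

theorem unitarity_smul {z z' : F} (h : z + z' + β * z * z' = 0) (j c l : Fin m)
    (v : Fin m → H) :
    permCoeff β z j l • ((if j = c then permCoeff β z' c l • v l else 0) +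
        if l = c then diagCoeff z' c j • v j else 0) +
      diagCoeff z l j • ((if l = c then permCoeff β z' c j • v j else 0) +
        if j = c then diagCoeff z' c l • v l else 0) =
    if j = c then v l else 0 := by
  have off_diagonal := permCoeff_mul_diagCoeff_add_swap h j c
  have diagonal := permCoeff_mul_add_diagCoeff_mul h c l
  split_ifs with hjc hlc hlc
  · subst hjc hlc
    linear_combination (norm := module) diagonal • v l + off_diagonal • v l
  · subst hjc
    linear_combination (norm := module) diagonal • v l
  · subst hlc
    linear_combination (norm := module) off_diagonal • v j
  · simp

-- The dressing matrix is the monodromy of the nested model, and `R(σ α, σ α)` is a permutation.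
theorem frontComponent_monodromy {σ : Fin k → F} (hσ : ∀ c, 1 + β * σ c ≠ 0) (α : Fin k)
    (i c j : Fin m) (ψ : (Fin k → Fin m) → F) :
    frontComponent β T Ω σ α j (monodromy m k β σ (σ α) i c ψ) =
      if j = c then dressedFrontComponent β T Ω σ α i ψ else 0 := by
  induction σ using Fin.consInduction generalizing j c with
  | elim0 => exact α.elim0
  | cons x τ ih =>
    simp only [Fin.forall_fin_succ, Fin.cons_zero, Fin.cons_succ] at hσ
    refine Fin.cases ?_ (fun α => ?_) α
    · simp [frontComponent_cons_zero, dressedFrontComponent_cons_zero, slice_monodromy, om_self,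
        permCoeff_zero, diagCoeff_zero, apply_ite (betheMap T Ω τ)]
    · have step (s l : Fin m) : frontComponent β T Ω τ α l
            (slice F s (monodromy m _ β (Fin.cons x τ) (τ α) i c ψ)) =
          (if s = c then permCoeff β (om β (τ α) x) c l •
            dressedFrontComponent β T Ω τ α i (slice F l ψ) else 0) +
          if l = c then diagCoeff (om β (τ α) x) c s •
            dressedFrontComponent β T Ω τ α i (slice F s ψ) else 0 := by
        simp [slice_monodromy, apply_ite (frontComponent β T Ω _ α l), ih hσ.2]
      simp only [frontComponent_cons_succ, dressedFrontComponent_cons_succ, Fin.cons_succ, step,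
        unitarity_smul (om_add_om_swap hσ.1 (hσ.2 α)) j c _
          fun s => dressedFrontComponent β T Ω τ α i (slice F s ψ)]
      split_ifs <;> simp

theorem sum_zero_succ_frontComponent_cons_succ (u x : F) (τ : Fin k → F) (α : Fin k)
    (ψ : (Fin (k + 1) → Fin m) → F) :
    ∑ s : Fin m, T u 0 s.succ (frontComponent β T Ω (Fin.cons x τ) α.succ s ψ) =
      ∑ s : Fin m, ∑ i : Fin m,
        (permCoeff β (om β x (τ α)) s i • (T u 0 s.succ * T x 0 i.succ) +
          diagCoeff (om β x (τ α)) s i • (T u 0 i.succ * T x 0 s.succ))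
          (frontComponent β T Ω τ α i (slice F s ψ)) := by
  simp only [frontComponent_cons_succ, map_sum, map_add, map_smul, LinearMap.add_apply,
    LinearMap.smul_apply, Module.End.mul_apply, Finset.sum_add_distrib]
  congr 1
  exact Finset.sum_comm

theorem IsRTT.sum_inv_om_smul_sub (hT : IsRTT β T) {u x y : F} (hu : 1 + β * u ≠ 0)
    (hy : 1 + β * y ≠ 0) (hux : u ≠ x) (huy : u ≠ y) (hxy : x ≠ y) (r : F) (s : Fin m)
    (w : Fin m → H) :
    (om β x u)⁻¹ • (((om β y u)⁻¹ * r) • T x 0 s.succ (∑ i : Fin m, T u 0 i.succ (w i)) -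
        ((om β y x)⁻¹ * r) • T u 0 s.succ (∑ i : Fin m, T x 0 i.succ (w i))) =
      ((om β y u)⁻¹ * ((om β x y)⁻¹ * r)) • ∑ i : Fin m,
        (permCoeff β (om β x y) s i • (T u 0 s.succ * T x 0 i.succ) +
          diagCoeff (om β x y) s i • (T u 0 i.succ * T x 0 s.succ)) (w i) := by
  simp only [map_sum, Finset.smul_sum, ← Finset.sum_sub_distrib]
  refine Finset.sum_congr rfl fun i _ => ?_
  have exchange := LinearMap.congr_fun (hT.inv_om_smul_sub hu hy hux huy hxy s i) (w i)
  simp only [LinearMap.smul_apply, LinearMap.sub_apply, Module.End.mul_apply] at exchange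
  linear_combination (norm := module) r • exchange

theorem zero_zero_betheMap (hT : IsRTT β T) (hΩ : IsVacuum T Ω a d) {σ : Fin k → F}
    (hσ : ∀ c, 1 + β * σ c ≠ 0) (hinj : σ.Injective) {u : F} (hu : 1 + β * u ≠ 0)
    (huσ : ∀ c, σ c ≠ u) (ψ : (Fin k → Fin m) → F) :
    T u 0 0 (betheMap T Ω σ ψ) = (a u * ∏ c, (om β (σ c) u)⁻¹) • betheMap T Ω σ ψ -
      ∑ α, ((om β (σ α) u)⁻¹ * (a (σ α) * ∏ c ∈ Finset.univ.erase α, (om β (σ c) (σ α))⁻¹)) •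
        ∑ s : Fin m, T u 0 s.succ (frontComponent β T Ω σ α s ψ) := by
  induction σ using Fin.consInduction generalizing u with
  | elim0 => simpa [betheMap_zero, hΩ.zero_zero] using smul_comm _ _ _
  | cons x τ ih =>
    simp only [Fin.forall_fin_succ, Fin.cons_zero, Fin.cons_succ] at hσ huσ
    obtain ⟨hx, hτ⟩ := hσ
    obtain ⟨hxu, hτu⟩ := huσ
    obtain ⟨hxτ, hτinj⟩ := Fin.cons_injective_iff.mp hinj
    replace hxτ (c) : τ c ≠ x := fun h => hxτ ⟨c, h⟩
    set r := fun α => a (τ α) * ∏ c ∈ Finset.univ.erase α, (om β (τ c) (τ α))⁻¹ with hr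
    have on_slice (s : Fin m) :
        T u 0 0 (T x 0 s.succ (betheMap T Ω τ (slice F s ψ))) =
          (a u * ((om β x u)⁻¹ * ∏ c, (om β (τ c) u)⁻¹)) •
            T x 0 s.succ (betheMap T Ω τ (slice F s ψ)) -
          ((om β x u)⁻¹ * (a x * ∏ c, (om β (τ c) x)⁻¹)) •
            T u 0 s.succ (betheMap T Ω τ (slice F s ψ)) -
          ∑ α, ((om β (τ α) u)⁻¹ * ((om β x (τ α))⁻¹ * r α)) • ∑ i : Fin m,
            (permCoeff β (om β x (τ α)) s i • (T u 0 s.succ * T x 0 i.succ) +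
              diagCoeff (om β x (τ α)) s i • (T u 0 i.succ * T x 0 s.succ))
              (frontComponent β T Ω τ α i (slice F s ψ)) := by
      rw [← Module.End.mul_apply, hT.zero_zero_mul_zero_succ hu hxu.symm]
      simp only [← fun α => hT.sum_inv_om_smul_sub hu (hτ α) hxu.symm (hτu α).symm (hxτ α).symm]
      simp only [LinearMap.smul_apply, LinearMap.sub_apply, Module.End.mul_apply,
        ih hτ hτinj hu hτu, ih hτ hτinj hx hxτ, map_sub, map_smul, map_sum (T x 0 s.succ),
        map_sum (T u 0 s.succ), ← Finset.smul_sum, Finset.sum_sub_distrib, hr]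
      module
    simp only [betheMap_cons, map_sum, on_slice, Finset.sum_sub_distrib, ← Finset.smul_sum]
    rw [Finset.sum_comm, Fin.prod_univ_succ, Fin.sum_univ_succ]
    simp only [frontComponent_cons_zero, sum_zero_succ_frontComponent_cons_succ, ← Finset.smul_sum,
      prod_erase_zero, prod_erase_succ, Fin.cons_zero, Fin.cons_succ, hr, sub_sub,
      mul_left_comm (a (τ _))]

theorem betheMap_cons_monodromy (u x : F) (τ : Fin k → F) (i j : Fin m)
    (ψ : (Fin (k + 1) → Fin m) → F) :
    betheMap T Ω (Fin.cons x τ : Fin (k + 1) → F) (monodromy m (k + 1) β (Fin.cons x τ) u i j ψ) =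
      ∑ s, (permCoeff β (om β u x) j s •
          T x 0 j.succ (betheMap T Ω τ (monodromy m k β τ u i s (slice F s ψ))) +
        diagCoeff (om β u x) j s •
          T x 0 s.succ (betheMap T Ω τ (monodromy m k β τ u i j (slice F s ψ)))) := by
  simp [betheMap_cons, slice_monodromy, Finset.sum_add_distrib, apply_ite (betheMap T Ω τ),
    apply_ite (T x _ _)]

theorem IsRTT.inv_om_smul_add_apply (hT : IsRTT β T) {u x y : F} (hx : 1 + β * x ≠ 0)
    (hux : u ≠ x) (huy : u ≠ y) (hxy : x ≠ y) (r : F) (j s : Fin m) (w : H) :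
    (om β u x)⁻¹ • (permCoeff β (om β u x) j s •
          ((om β y u)⁻¹ * r) • T x 0 j.succ (T u 0 s.succ w) +
        diagCoeff (om β u x) j s • ((om β y u)⁻¹ * r) • T x 0 s.succ (T u 0 j.succ w)) +
      (om β x u)⁻¹ • ((om β y x)⁻¹ * r) • T u 0 j.succ (T x 0 s.succ w) =
    ((om β y u)⁻¹ * ((om β y x)⁻¹ * r)) • T u 0 j.succ (T x 0 s.succ w) := by
  have exchange := LinearMap.congr_fun (hT.inv_om_smul_add hx hux huy hxy j s) w
  simp only [LinearMap.smul_apply, LinearMap.add_apply, Module.End.mul_apply] at exchange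
  linear_combination (norm := module) r • exchange

theorem succ_succ_betheMap (hT : IsRTT β T) (hΩ : IsVacuum T Ω a d) {σ : Fin k → F}
    (hσ : ∀ c, 1 + β * σ c ≠ 0) (hinj : σ.Injective) {u : F} (huσ : ∀ c, σ c ≠ u) (i j : Fin m)
    (ψ : (Fin k → Fin m) → F) :
    T u i.succ j.succ (betheMap T Ω σ ψ) =
      (d u * ∏ c, (om β u (σ c))⁻¹) • betheMap T Ω σ (monodromy m k β σ u i j ψ) +
      ∑ α, ((om β (σ α) u)⁻¹ * (d (σ α) * ∏ c ∈ Finset.univ.erase α, (om β (σ α) (σ c))⁻¹)) •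
        T u 0 j.succ (dressedFrontComponent β T Ω σ α i ψ) := by
  induction σ using Fin.consInduction generalizing u j with
  | elim0 =>
    by_cases hij : i = j <;>
      simp [betheMap_zero, hΩ.succ_succ, monodromy_zero_apply, hij, smul_smul, mul_comm]
  | cons x τ ih =>
    simp only [Fin.forall_fin_succ, Fin.cons_zero, Fin.cons_succ] at hσ huσ
    obtain ⟨hx, hτ⟩ := hσ
    obtain ⟨hxu, hτu⟩ := huσ
    obtain ⟨hxτ, hτinj⟩ := Fin.cons_injective_iff.mp hinj
    replace hxτ (c) : τ c ≠ x := fun h => hxτ ⟨c, h⟩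
    set r := fun α => d (τ α) * ∏ c ∈ Finset.univ.erase α, (om β (τ α) (τ c))⁻¹ with hr
    have on_slice (s : Fin m) :
        T u i.succ j.succ (T x 0 s.succ (betheMap T Ω τ (slice F s ψ))) =
          (d u * ((om β u x)⁻¹ * ∏ c, (om β u (τ c))⁻¹)) • (permCoeff β (om β u x) j s •
              T x 0 j.succ (betheMap T Ω τ (monodromy m _ β τ u i s (slice F s ψ))) +
            diagCoeff (om β u x) j s •
              T x 0 s.succ (betheMap T Ω τ (monodromy m _ β τ u i j (slice F s ψ)))) +
          ((om β x u)⁻¹ * (d x * ∏ c, (om β x (τ c))⁻¹)) •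
            T u 0 j.succ (betheMap T Ω τ (monodromy m _ β τ x i s (slice F s ψ))) +
          ∑ α, ((om β (τ α) u)⁻¹ * ((om β (τ α) x)⁻¹ * r α)) • T u 0 j.succ
            (T x 0 s.succ (dressedFrontComponent β T Ω τ α i (slice F s ψ))) := by
      rw [← Module.End.mul_apply, hT.succ_succ_mul_zero_succ hx hxu.symm]
      simp only [← fun α => hT.inv_om_smul_add_apply hx hxu.symm (hτu α).symm (hxτ α).symm]
      simp only [LinearMap.smul_apply, LinearMap.add_apply, Module.End.mul_apply,
        ih hτ hτinj hτu, ih hτ hτinj hxτ, map_add, map_smul, map_sum,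
        ← Finset.smul_sum, Finset.sum_add_distrib, hr]
      module
    rw [betheMap_cons_monodromy, betheMap_cons]
    simp only [map_sum, on_slice, Finset.sum_add_distrib, ← Finset.smul_sum]
    rw [Finset.sum_comm, Fin.prod_univ_succ, Fin.sum_univ_succ]
    simp only [dressedFrontComponent_cons_zero, dressedFrontComponent_cons_succ, map_sum,
      ← Finset.smul_sum, prod_erase_zero, prod_erase_succ, Fin.cons_zero, Fin.cons_succ, hr,
      add_assoc, mul_left_comm (d (τ _))]

theorem smul_dressedFrontComponent {σ : Fin k → F} (hσ : ∀ c, 1 + β * σ c ≠ 0) (α : Fin k)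
    {b : Fin m → F} {ψ : (Fin k → Fin m) → F} {μ : F}
    (hμ : ∑ i, b i • monodromy m k β σ (σ α) i i ψ = μ • ψ) (i : Fin m) :
    b i • dressedFrontComponent β T Ω σ α i ψ = μ • frontComponent β T Ω σ α i ψ := by
  rw [← map_smul (frontComponent β T Ω σ α i), ← hμ, map_sum]
  simp [frontComponent_monodromy hσ]

-- The two kinds of unwanted terms cancel by `hbethe`.
theorem sum_smul_betheMap (hT : IsRTT β T) (hΩ : IsVacuum T Ω a d) {σ : Fin k → F}
    (hσ : ∀ c, 1 + β * σ c ≠ 0) (hinj : σ.Injective) {u : F} (hu : 1 + β * u ≠ 0)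
    (huσ : ∀ c, σ c ≠ u) {b : Fin (m + 1) → F} {ψ : (Fin k → Fin m) → F} {ν : F} {μ : Fin k → F}
    (hν : ∑ i, b i.succ • monodromy m k β σ u i i ψ = ν • ψ)
    (hμ : ∀ α, ∑ i, b i.succ • monodromy m k β σ (σ α) i i ψ = μ α • ψ)
    (hbethe : ∀ α, b 0 * (a (σ α) * ∏ c ∈ Finset.univ.erase α, (om β (σ c) (σ α))⁻¹) =
      μ α * (d (σ α) * ∏ c ∈ Finset.univ.erase α, (om β (σ α) (σ c))⁻¹)) :
    ∑ i, b i • T u i i (betheMap T Ω σ ψ) =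
      (b 0 * (a u * ∏ c, (om β (σ c) u)⁻¹) + ν * (d u * ∏ c, (om β u (σ c))⁻¹)) •
        betheMap T Ω σ ψ := by
  have wanted (r : F) : ∑ i : Fin m, b i.succ • r • betheMap T Ω σ (monodromy m k β σ u i i ψ) =
      (ν * r) • betheMap T Ω σ ψ := by
    rw [mul_comm, mul_smul, ← map_smul (betheMap T Ω σ) ν, ← hν]
    simp only [map_sum, map_smul, Finset.smul_sum, smul_comm (b _)]
  have unwanted (α : Fin k) (r : F) :
      ∑ i : Fin m, b i.succ • r • T u 0 i.succ (dressedFrontComponent β T Ω σ α i ψ) =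
        r • μ α • ∑ i : Fin m, T u 0 i.succ (frontComponent β T Ω σ α i ψ) := by
    simp only [Finset.smul_sum, smul_comm (b _) r, ← map_smul (T u 0 _),
      smul_dressedFrontComponent hσ α (hμ α)]
  have cancel : ∑ i : Fin m, b i.succ • ∑ α, ((om β (σ α) u)⁻¹ *
        (d (σ α) * ∏ c ∈ Finset.univ.erase α, (om β (σ α) (σ c))⁻¹)) •
          T u 0 i.succ (dressedFrontComponent β T Ω σ α i ψ) =
      b 0 • ∑ α, ((om β (σ α) u)⁻¹ *
        (a (σ α) * ∏ c ∈ Finset.univ.erase α, (om β (σ c) (σ α))⁻¹)) •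
          ∑ i : Fin m, T u 0 i.succ (frontComponent β T Ω σ α i ψ) := by
    simp only [Finset.smul_sum (r := b _)]
    rw [Finset.sum_comm]
    refine Finset.sum_congr rfl fun α _ => ?_
    rw [unwanted, smul_smul, smul_smul, mul_assoc, mul_comm _ (μ α), ← hbethe, mul_left_comm]
  simp only [Fin.sum_univ_succ, zero_zero_betheMap hT hΩ hσ hinj hu huσ,
    succ_succ_betheMap hT hΩ hσ hinj huσ, smul_add, Finset.sum_add_distrib, wanted, cancel]
  module

end BetheAnsatz

section Continuation

open Polynomial

variable [Field F]

theorem exists_polynomial_Rsite (n N : ℕ) (β τ : F) (i : Fin N) :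
    ∃ P : Matrix (Fin n × (Fin N → Fin n)) (Fin n × (Fin N → Fin n)) F[X],
      ∀ u, (evalRingHom u).mapMatrix P = Rsite n N β u τ i := by
  let z : F[X] := (X - C τ) * C (1 + β * τ)⁻¹
  have eval_z (u : F) : z.eval u = om β u τ := by simp [z, om, div_eq_mul_inv]
  refine ⟨Matrix.of fun p q =>
    ((if p.1 = q.2 i ∧ p.2 i = q.1 then (if q.1 < q.2 i then 1 + C β * z else 1) else 0) +
      (if p.1 = q.1 ∧ p.2 i = q.2 i ∧ q.2 i < q.1 then z else 0)) *
      (if ∀ j, j ≠ i → p.2 j = q.2 j then 1 else 0), fun u => ?_⟩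
  ext p q
  simp only [Rsite, Rmat, Matrix.of_apply, RingHom.mapMatrix_apply, Matrix.map_apply,
    coe_evalRingHom, eval_mul, eval_add, apply_ite (eval u), eval_one, eval_zero, eval_C, eval_z]

theorem exists_polynomial_Tmono (n N : ℕ) (β : F) (t : Fin N → F) :
    ∃ P : Matrix (Fin n × (Fin N → Fin n)) (Fin n × (Fin N → Fin n)) F[X],
      ∀ u, (evalRingHom u).mapMatrix P = Tmono n N β u t := by
  choose P hP using fun i => exists_polynomial_Rsite n N β (t i) i
  refine ⟨(List.ofFn P).reverse.prod, fun u => ?_⟩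
  simp only [Tmono, map_list_prod, List.map_reverse, List.map_ofFn, Function.comp_def, hP]

theorem exists_polynomial_transferM (n N : ℕ) (β : F) (t : Fin N → F) (b : Fin n → F) :
    ∃ P : Matrix (Fin N → Fin n) (Fin N → Fin n) F[X],
      ∀ u, (evalRingHom u).mapMatrix P = transferM n N β u t b := by
  obtain ⟨P, hP⟩ := exists_polynomial_Tmono n N β t
  refine ⟨Matrix.of fun s s' => ∑ a, C (b a) * P (a, s) (a, s'), fun u => ?_⟩
  ext s s'
  simp [transferM, ← hP, eval_finsetSum]

-- The `2 × 2` minors of the pair `(P(u) ψ, ψ)` are polynomials in `u` with infinitely many roots.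
theorem exists_eigenvalue_of_eigenvalue_off_finite [Infinite F] {ι : Type*} [Fintype ι]
    [DecidableEq ι] (P : Matrix ι ι F[X]) {ψ : ι → F} {S : Set F} (hS : S.Finite) {L : F → F}
    (hL : ∀ u ∉ S, ((evalRingHom u).mapMatrix P).mulVec ψ = L u • ψ) :
    ∃ L' : F → F, (∀ u, ((evalRingHom u).mapMatrix P).mulVec ψ = L' u • ψ) ∧
      ∀ u ∉ S, L' u = L u := by
  obtain rfl | hψ := eq_or_ne ψ 0
  · exact ⟨L, by simp, fun _ _ => rfl⟩
  obtain ⟨s, hs⟩ := Function.ne_iff.mp hψ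
  rw [Pi.zero_apply] at hs
  let Pψ : ι → F[X] := P.mulVec fun r => C (ψ r)
  have eval_Pψ (u : F) : (fun r => (Pψ r).eval u) = ((evalRingHom u).mapMatrix P).mulVec ψ := by
    ext r
    simp [Pψ, Matrix.mulVec, dotProduct, eval_finsetSum]
  have minor_eq_zero (r : ι) : Pψ r * C (ψ s) - C (ψ r) * Pψ s = 0 := by
    refine eq_zero_of_infinite_isRoot _ (hS.infinite_compl.mono fun u hu => ?_)
    have eigen (r : ι) : (Pψ r).eval u = L u * ψ r := congrFun ((eval_Pψ u).trans (hL u hu)) r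
    simp only [Set.mem_ofPred_eq, IsRoot.def, eval_sub, eval_mul, eval_C, eigen]
    ring
  refine ⟨fun u => (Pψ s).eval u / ψ s, fun u => ?_, fun u hu => ?_⟩
  · rw [← eval_Pψ]
    ext r
    have minor := congrArg (eval u) (minor_eq_zero r)
    simp only [eval_sub, eval_mul, eval_C, eval_zero] at minor
    rw [Pi.smul_apply, smul_eq_mul, div_mul_eq_mul_div, eq_div_iff hs]
    linear_combination minor
  · rw [div_eq_iff hs]
    exact congrFun ((eval_Pψ u).trans (hL u hu)) s

theorem exists_transferM_eigenvalue_of_eigenvalue_off_finite [Infinite F] {n N : ℕ} {β : F}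
    {t : Fin N → F} {b : Fin n → F} {ψ : (Fin N → Fin n) → F} {S : Set F} (hS : S.Finite)
    {L : F → F} (hL : ∀ u ∉ S, (transferM n N β u t b).mulVec ψ = L u • ψ) :
    ∃ L' : F → F, (∀ u, (transferM n N β u t b).mulVec ψ = L' u • ψ) ∧ ∀ u ∉ S, L' u = L u := by
  obtain ⟨P, hP⟩ := exists_polynomial_transferM n N β t b
  simp only [← hP] at hL ⊢
  exact exists_eigenvalue_of_eigenvalue_off_finite P hS hL

end Continuation

section BetheEquations

variable [Field F] {β : F}

theorem prod_erase_inv_om_swap {ι : Type*} [Fintype ι] [DecidableEq ι] {σ : ι → F} {α : ι}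
    (hα : 1 + β * σ α ≠ 0) :
    ∏ c ∈ Finset.univ.erase α, (om β (σ α) (σ c))⁻¹ =
      (-1) ^ (Fintype.card ι - 1) * (∏ c, (1 + β * om β (σ c) (σ α))) *
        ∏ c ∈ Finset.univ.erase α, (om β (σ c) (σ α))⁻¹ := by
  have full_prod : ∏ c, (1 + β * om β (σ c) (σ α)) =
      ∏ c ∈ Finset.univ.erase α, (1 + β * om β (σ c) (σ α)) := by
    rw [← Finset.mul_prod_erase _ _ (Finset.mem_univ α), om_self, mul_zero, add_zero, one_mul]
  simp only [inv_om_eq_neg_one_add_om_mul_inv_om hα, Finset.prod_mul_distrib, Finset.prod_neg,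
    Finset.card_erase_of_mem (Finset.mem_univ α), Finset.card_univ, full_prod]

theorem mul_prod_erase_inv_om_of_bethe {ι : Type*} [Fintype ι] [DecidableEq ι] {σ : ι → F} {α : ι}
    (hα : 1 + β * σ α ≠ 0) {b d μ : F}
    (hbethe : (∏ c, (1 + β * om β (σ c) (σ α))) * d * μ = (-1) ^ (Fintype.card ι - 1) * b) :
    b * ∏ c ∈ Finset.univ.erase α, (om β (σ c) (σ α))⁻¹ =
      μ * (d * ∏ c ∈ Finset.univ.erase α, (om β (σ α) (σ c))⁻¹) := by
  have sign : ((-1 : F) ^ (Fintype.card ι - 1)) * (-1) ^ (Fintype.card ι - 1) = 1 := by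
    rw [← mul_pow, neg_one_mul, neg_neg, one_pow]
  rw [prod_erase_inv_om_swap hα]
  linear_combination (-(-1) ^ (Fintype.card ι - 1) * hbethe - b * sign) *
    ∏ c ∈ Finset.univ.erase α, (om β (σ c) (σ α))⁻¹

theorem finite_setOf_one_add_mul_eq_zero (β : F) : {u : F | 1 + β * u = 0}.Finite := by
  refine (Set.finite_singleton (-β⁻¹)).subset fun u (hu : 1 + β * u = 0) => ?_
  rw [Set.mem_singleton_iff, ← neg_eq_iff_eq_neg]
  exact eq_inv_of_mul_eq_one_right (by linear_combination -hu)

end BetheEquations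

section NestedStates

variable [Field F]

theorem transferM_mulVec {n N : ℕ} (β u : F) (t : Fin N → F) (b : Fin n → F)
    (ψ : (Fin N → Fin n) → F) :
    (transferM n N β u t b).mulVec ψ = ∑ i, b i • monodromy n N β t u i i ψ := by
  have blocks : transferM n N β u t b = ∑ i, b i • blockOp n N β u t i i := by
    ext s s'
    simp [transferM, blockOp, Matrix.sum_apply]
  simp only [blocks, Matrix.sum_mulVec, Matrix.smul_mulVec, monodromy_apply_apply]

theorem prod_blockOp_mulVec {n N k : ℕ} (β : F) (t : Fin N → F) (σ : Fin k → F)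
    (r c : Fin k → Fin n) (ψ : (Fin N → Fin n) → F) :
    ((List.ofFn fun a => blockOp n N β (σ a) t (r a) (c a)).prod).mulVec ψ =
      (List.ofFn fun a => monodromy n N β t (σ a) (r a) (c a)).prod ψ := by
  rw [← Matrix.toLinAlgEquiv'_apply, map_list_prod, List.map_ofFn]
  rfl

theorem psi_zero (β : F) (k : ℕ → ℕ) (σ : (l : ℕ) → Fin (k l) → F) (m : ℕ) :
    psi β k σ 0 m = betheMap (monodromy 2 (k m) β (σ m)) (ket 2 (k m) fun _ => 0) (σ (m + 1))
      (fun _ => 1) := by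
  rw [psi, prod_blockOp_mulVec, betheMap_apply, Fintype.sum_unique, one_smul]
  rfl

theorem psi_succ (β : F) (k : ℕ → ℕ) (σ : (l : ℕ) → Fin (k l) → F) (j m : ℕ) :
    psi β k σ (j + 1) m = betheMap (monodromy (j + 3) (k m) β (σ m))
      (ket (j + 3) (k m) fun _ => 0) (σ (m + 1)) (psi β k σ j (m + 1)) := by
  ext s
  simp only [psi, prod_blockOp_mulVec, betheMap_apply, Finset.sum_apply, Pi.smul_apply, smul_eq_mul]

theorem monodromy_one_apply {N : ℕ} (β u : F) (t : Fin N → F) (ψ : (Fin N → Fin 1) → F) :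
    monodromy 1 N β t u 0 0 ψ = ψ := by
  induction N with
  | zero => exact monodromy_zero_apply ..
  | succ N ih =>
    refine ext_slice fun s => ?_
    obtain rfl := Subsingleton.elim s 0
    simp [slice_monodromy, ih, permCoeff_self, diagCoeff_self]

theorem transferM_one_mulVec {N : ℕ} (β u : F) (t : Fin N → F) (b : Fin 1 → F)
    (ψ : (Fin N → Fin 1) → F) : (transferM 1 N β u t b).mulVec ψ = b 0 • ψ := by
  rw [transferM_mulVec, Fin.sum_univ_one, monodromy_one_apply]

end NestedStates

section Eigenstate

variable [Field F] [Infinite F] {β : F}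

-- The eigenvalue simplifies at the parameters `t α` because the lower right block of the monodromy
-- annihilates the vacuum there.
theorem exists_transferM_betheMap_eigenvalue {m N k : ℕ} {t : Fin N → F}
    (ht : ∀ a, 1 + β * t a ≠ 0) {σ : Fin k → F} (hσ : ∀ c, 1 + β * σ c ≠ 0) (hinj : σ.Injective)
    (hσt : ∀ c a, σ c ≠ t a) {b : Fin (m + 1) → F} {ψ : (Fin k → Fin m) → F} {ν : F → F}
    (hψ : ∀ u, (transferM m k β u σ fun i => b i.succ).mulVec ψ = ν u • ψ)
    (hbethe : ∀ α, (∏ c, (1 + β * om β (σ c) (σ α))) * (∏ i, om β (σ α) (t i)) * ν (σ α) =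
      (-1) ^ (k - 1) * b 0) :
    ∃ L : F → F,
      (∀ u, (transferM (m + 1) N β u t b).mulVec
          (betheMap (monodromy (m + 1) N β t) (ket (m + 1) N fun _ => 0) σ ψ) =
        L u • betheMap (monodromy (m + 1) N β t) (ket (m + 1) N fun _ => 0) σ ψ) ∧
      ∀ α, L (t α) = b 0 * ∏ c, (om β (σ c) (t α))⁻¹ := by
  simp only [transferM_mulVec (n := m)] at hψ
  have generic (u : F) (hu : u ∉ {u | 1 + β * u = 0} ∪ Set.range σ) :=
    sum_smul_betheMap (isRTT_monodromy ht) (isVacuum_monodromy β t) hσ hinj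
      (fun h => hu (.inl h)) (fun c h => hu (.inr ⟨c, h⟩)) (hψ u) (fun α => hψ (σ α)) fun α => by
        simpa using mul_prod_erase_inv_om_of_bethe (hσ α) (by simpa using hbethe α)
  simp only [← transferM_mulVec] at generic
  obtain ⟨L, hL, hLgeneric⟩ := exists_transferM_eigenvalue_of_eigenvalue_off_finite
    ((finite_setOf_one_add_mul_eq_zero β).union (Set.finite_range σ)) generic
  refine ⟨L, hL, fun α => ?_⟩
  have vacuum_eigenvalue : ∏ i, om β (t α) (t i) = 0 :=
    Finset.prod_eq_zero (Finset.mem_univ α) (om_self β _)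
  rw [hLgeneric (t α) (by simpa [ht] using fun c => hσt c α), vacuum_eigenvalue]
  simp

theorem exists_transferM_psi_eigenvalue {p : ℕ} {b : ℕ → F} {k : ℕ → ℕ}
    {σ : (l : ℕ) → Fin (k l) → F} (hden : ∀ m ≤ p + 1, ∀ a, 1 + β * σ m a ≠ 0)
    (hinj : ∀ m ≤ p, (σ (m + 1)).Injective) (hcross : ∀ m ≤ p, ∀ a c, σ (m + 1) a ≠ σ m c)
    (hktop : k (p + 2) = 0)
    (hbethe : ∀ m ≤ p, ∀ α, (∏ a, (1 + β * om β (σ (m + 1) a) (σ (m + 1) α))) *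
        (∏ i, om β (σ (m + 1) α) (σ m i)) *
        (b (m + 1) * ∏ c, (om β (σ (m + 2) c) (σ (m + 1) α))⁻¹) =
      (-1) ^ (k (m + 1) - 1) * b m) {j m : ℕ} (hjm : m + j = p) :
    ∃ L : F → F,
      (∀ u, (transferM (j + 2) (k m) β u (σ m) fun a => b (m + a)).mulVec (psi β k σ j m) =
        L u • psi β k σ j m) ∧
      ∀ α, L (σ m α) = b m * ∏ c, (om β (σ (m + 1) c) (σ m α))⁻¹ := by
  induction j generalizing m with
  | zero =>
    obtain rfl : m = p := hjm
    have : IsEmpty (Fin (k (m + 2))) := hktop ▸ Fin.isEmpty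
    rw [psi_zero]
    refine exists_transferM_betheMap_eigenvalue (hden m m.le_succ) (hden (m + 1) le_rfl)
      (hinj m le_rfl) (hcross m le_rfl) (fun u => transferM_one_mulVec ..) fun α => ?_
    simpa using hbethe m le_rfl α
  | succ j ih =>
    obtain ⟨ν, hν, hνσ⟩ := ih (m := m + 1) (by omega)
    have hm : m ≤ p := by omega
    rw [psi_succ]
    refine exists_transferM_betheMap_eigenvalue (hden m (by omega)) (hden (m + 1) (by omega))
      (hinj m hm) (hcross m hm) (ν := ν) ?_ fun α => ?_
    · simpa only [Fin.val_succ, add_assoc, add_comm 1] using hν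
    · simpa [hνσ] using hbethe m hm α

theorem bethe_ansatz_eigenstate_general (p : ℕ) (β : F) (b : ℕ → F) (k : ℕ → ℕ)
    (σ : (l : ℕ) → Fin (k l) → F) (hktop : k (p + 2) = 0) (hb : ∀ m ≤ p, b (m + 1) ≠ 0)
    (hden : ∀ m ≤ p + 1, ∀ a, 1 + β * σ m a ≠ 0) (hinj : ∀ m ≤ p, (σ (m + 1)).Injective)
    (hcross : ∀ m ≤ p, ∀ a c, σ (m + 1) a ≠ σ m c)
    (hBAE : ∀ m ≤ p, ∀ α, (∏ a, (1 + β * om β (σ (m + 1) a) (σ (m + 1) α))) *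
        (∏ i, om β (σ (m + 1) α) (σ m i)) =
      (-1) ^ (k (m + 1) - 1) * (b m / b (m + 1)) *
        ∏ c, om β (σ (m + 2) c) (σ (m + 1) α)) :
    ∃ Λ : F → F, ∀ u : F,
      (transferM (p + 2) (k 0) β u (σ 0) fun a => b a).mulVec (psi β k σ p 0) =
        Λ u • psi β k σ p 0 := by
  have prod_ne_zero (m : ℕ) (hm : m ≤ p) (α : Fin (k (m + 1))) :
      ∏ c, om β (σ (m + 2) c) (σ (m + 1) α) ≠ 0 := by
    refine Finset.prod_ne_zero_iff.mpr fun c _ => ?_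
    obtain rfl | hlt := hm.eq_or_lt
    · exact (Fin.cast hktop c).elim0
    · exact om_ne_zero (hden _ (by omega) α) (hcross (m + 1) hlt c α)
  obtain ⟨L, hL, -⟩ := exists_transferM_psi_eigenvalue (b := b) hden hinj hcross hktop
    (fun m hm α => by
      have := hb m hm
      have := prod_ne_zero m hm α
      rw [hBAE m hm α, Finset.prod_inv_distrib]
      field_simp) (zero_add p)
  exact ⟨L, by simpa only [zero_add] using hL⟩

end Eigenstate

/-- **Bethe ansatz equations ⇒ eigenstate** (Theorem `BAE`).  Here `n = p+3 ≥ 3`,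
`k 0 = N`, `σ 0 = t` (the equivariant parameters), `k n = 0`, and `q_m = b_{m-1}/b_m`.
If the Bethe ansatz equations hold for the parameters `σ^{(m)}_α` (`1 ≤ m ≤ n-1`),
then the nested Bethe ansatz state `ψ^{(0)}` is a common eigenvector of the
transfer matrices `t^{(n)}(u)`. -/
theorem bethe_ansatz_eigenstate [Field F] [CharZero F] (p : ℕ) (β : F) (b : ℕ → F)
    (k : ℕ → ℕ) (σ : (l : ℕ) → Fin (k l) → F)
    (hN : 1 ≤ k 0)
    (hk : ∀ m, 1 ≤ m → m ≤ p + 2 → 1 ≤ k m)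
    (hktop : k (p + 3) = 0)
    (hb : ∀ m, m ≤ p + 2 → b m ≠ 0)
    (hden : ∀ m, m ≤ p + 2 → ∀ a, 1 + β * σ m a ≠ 0)
    (hdist : ∀ m, 1 ≤ m → m ≤ p + 2 → ∀ a c, a ≠ c → σ m a ≠ σ m c)
    (hcross : ∀ m, m ≤ p + 1 → ∀ (a : Fin (k (m + 1))) (c : Fin (k m)),
      σ (m + 1) a ≠ σ m c)
    (hBAE : ∀ m, 1 ≤ m → m ≤ p + 2 → ∀ α : Fin (k m),
      (∏ a : Fin (k m), (1 + β * om β (σ m a) (σ m α))) *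
          (∏ i : Fin (k (m - 1)), om β (σ m α) (σ (m - 1) i)) =
        (-1) ^ (k m - 1) * (b (m - 1) / b m) *
          ∏ c : Fin (k (m + 1)), om β (σ (m + 1) c) (σ m α)) :
    ∃ Λ : F → F, ∀ u : F,
      Matrix.mulVec (transferM (p + 3) (k 0) β u (σ 0) fun a => b (a : ℕ))
          (psi β k σ (p + 1) 0) =
        Λ u • psi β k σ (p + 1) 0 := by
  have : Infinite F := CharZero.infinite F
  exact bethe_ansatz_eigenstate_general (p + 1) β b k σ hktop (fun m hm => hb (m + 1) (by omega))
    hden (fun m hm a c => not_imp_not.mp (hdist (m + 1) (by omega) (by omega) a c)) hcross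
    fun m hm => hBAE (m + 1) (by omega) (by omega)
end
end
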